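/- arXiv:1010.0086 — 9 statements merged into one kernel-verified Lean document; each statement's English description precedes it below -/
import Mathlib

section
/- Let a ∈ ℬ be a Lusztig datum and i ∈ I with ε_i(a) > 0. Then a_{k_e(a,i), i+1} ≥ 1; consequently the modified tuple ẽ_i a (obtained from a by increasing a_{k_e,i} by 1 and decreasing a_{k_e,i+1} by 1) has all entries nonnegative, i.e. ẽ_i a ∈ ℬ. -/
/-- For a Lusztig datum `a` (modeled as an integer-valued function on `ℤ × ℤ`
that is nonnegative everywhere and vanishes off `Π = {(k,l) : 1 ≤ k < l ≤ n+1}`) and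
`i ∈ [1,n]` with `ε_i(a) > 0`, the entry `a_{k_e, i+1}` is at least `1`; consequently the
modified tuple `ẽ_i a` (increase `a_{k_e,i}` by 1 — discarded if `k_e = i`, since then the
entry is out of range — and decrease `a_{k_e,i+1}` by 1) has all entries nonnegative. -/
theorem stmt0 (n : ℕ) (hn : 1 ≤ n) (a : ℤ → ℤ → ℤ)
    (hnn : ∀ k l : ℤ, 0 ≤ a k l)
    (hsupp : ∀ k l : ℤ, ¬(1 ≤ k ∧ k < l ∧ l ≤ (n : ℤ) + 1) → a k l = 0)
    (i : ℤ) (hi1 : 1 ≤ i) (hi2 : i ≤ (n : ℤ))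
    (A : ℤ → ℤ) (hA : ∀ k, A k = ∑ s ∈ Finset.Icc 1 k, (a s (i + 1) - a (s - 1) i))
    (ε : ℤ) (hub : ∀ k ∈ Finset.Icc 1 i, A k ≤ ε)
    (hmem : ∃ k ∈ Finset.Icc 1 i, A k = ε)
    (hεpos : 0 < ε)
    (ke : ℤ) (hke : ke ∈ Finset.Icc 1 i) (hkeval : A ke = ε)
    (hkemin : ∀ k ∈ Finset.Icc 1 i, A k = ε → ke ≤ k) :
    1 ≤ a ke (i + 1) ∧
      ∀ k l : ℤ,
        0 ≤ (if k = ke ∧ l = i ∧ ke < i then a k l + 1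
             else if k = ke ∧ l = i + 1 then a k l - 1
             else a k l) := by
  rw [Finset.mem_Icc] at hke
  have hstep : A ke = A (ke - 1) + (a ke (i + 1) - a (ke - 1) i) := by
    rw [hA, hA]
    have h : Finset.Icc 1 ke = insert ke (Finset.Icc 1 (ke - 1)) := by
      ext x
      simp only [Finset.mem_Icc, Finset.mem_insert]
      omega
    rw [h, Finset.sum_insert (by simp)]
    ring
  have hlt : A (ke - 1) < ε := by
    by_cases h1 : ke = 1
    · subst h1
      rw [hA]
      simpa using hεpos
    · have hm : ke - 1 ∈ Finset.Icc 1 i := by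
        rw [Finset.mem_Icc]
        omega
      refine lt_of_le_of_ne (hub _ hm) fun h => ?_
      have := hkemin _ hm h
      omega
  have hn1 := hnn (ke - 1) i
  have key : 1 ≤ a ke (i + 1) := by omega
  refine ⟨key, fun k l => ?_⟩
  have hkl := hnn k l
  split_ifs with h1 h2
  · omega
  · obtain ⟨rfl, rfl⟩ := h2
    omega
  · exact hkl
end

section
/- Let a ∈ ℬ be a Lusztig datum and i ∈ I with ε_i^*(a) > 0. Then a_{i, l_e(a,i)+1} ≥ 1; consequently the modified tuple ẽ_i^* a (obtained from a by decreasing a_{i,l_e+1} by 1 and increasing a_{i+1,l_e+1} by 1) has all entries nonnegative, i.e. ẽ_i^* a ∈ ℬ. -/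
/-- For a Lusztig datum `a` and `i ∈ [1,n]` with `ε_i^*(a) > 0`, the entry
`a_{i, l_e+1}` is at least `1`; consequently the modified tuple `ẽ_i^* a` (decrease
`a_{i,l_e+1}` by 1 and increase `a_{i+1,l_e+1}` by 1 — the latter discarded if `l_e = i`,
since then the entry `(i+1,i+1)` is out of range) has all entries nonnegative. -/
theorem stmt1 (n : ℕ) (hn : 1 ≤ n) (a : ℤ → ℤ → ℤ)
    (hnn : ∀ k l : ℤ, 0 ≤ a k l)
    (hsupp : ∀ k l : ℤ, ¬(1 ≤ k ∧ k < l ∧ l ≤ (n : ℤ) + 1) → a k l = 0)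
    (i : ℤ) (hi1 : 1 ≤ i) (hi2 : i ≤ (n : ℤ))
    (Astar : ℤ → ℤ)
    (hAstar : ∀ l, Astar l = ∑ t ∈ Finset.Icc (l + 1) ((n : ℤ) + 1), (a i t - a (i + 1) (t + 1)))
    (ε : ℤ) (hub : ∀ l ∈ Finset.Icc i (n : ℤ), Astar l ≤ ε)
    (hmem : ∃ l ∈ Finset.Icc i (n : ℤ), Astar l = ε)
    (hεpos : 0 < ε)
    (lee : ℤ) (hle : lee ∈ Finset.Icc i (n : ℤ)) (hleval : Astar lee = ε)
    (hlemax : ∀ l ∈ Finset.Icc i (n : ℤ), Astar l = ε → l ≤ lee) :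
    1 ≤ a i (lee + 1) ∧
      ∀ k l : ℤ,
        0 ≤ (if k = i ∧ l = lee + 1 then a k l - 1
             else if k = i + 1 ∧ l = lee + 1 ∧ i < lee then a k l + 1
             else a k l) := by
  rw [Finset.mem_Icc] at hle
  have hrec : Astar lee = (a i (lee + 1) - a (i + 1) (lee + 1 + 1)) + Astar (lee + 1) := by
    rw [hAstar lee, hAstar (lee + 1)]
    have hs : Finset.Icc (lee + 1) ((n : ℤ) + 1)
        = insert (lee + 1) (Finset.Icc (lee + 1 + 1) ((n : ℤ) + 1)) := by
      ext x
      simp only [Finset.mem_Icc, Finset.mem_insert]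
      omega
    rw [hs, Finset.sum_insert (by simp)]
  have hlt : Astar (lee + 1) < ε := by
    by_cases h : lee + 1 ≤ (n : ℤ)
    · have hm : lee + 1 ∈ Finset.Icc i (n : ℤ) := by
        rw [Finset.mem_Icc]
        omega
      refine lt_of_le_of_ne (hub _ hm) (fun he => ?_)
      have := hlemax _ hm he
      omega
    · rw [hAstar, Finset.Icc_eq_empty (by omega)]
      simpa using hεpos
  have h1 : 1 ≤ a i (lee + 1) := by
    have := hnn (i + 1) (lee + 1 + 1)
    omega
  refine ⟨h1, fun k l => ?_⟩
  have := hnn k l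
  split_ifs with h h'
  · obtain ⟨rfl, rfl⟩ := h
    omega
  · omega
  · exact this
end

section
/- For every Lusztig datum a ∈ ℬ and every i ∈ I, both f̃_i a and f̃_i^* a have all entries nonnegative, i.e. they again lie in ℬ. Concretely: if k_f(a,i) < i then a_{k_f(a,i), i} ≥ 1, and if l_f(a,i) > i then a_{i+1, l_f(a,i)+1} ≥ 1. -/
/-- For every Lusztig datum `a` and `i ∈ [1,n]`, both `f̃_i a` and `f̃_i^* a`
have all entries nonnegative.  Concretely: if `k_f < i` then `a_{k_f,i} ≥ 1`, and if
`l_f > i` then `a_{i+1, l_f+1} ≥ 1`.  Here `f̃_i` decreases `a_{k_f,i}` by 1 (discarded if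
`k_f = i`) and increases `a_{k_f,i+1}` by 1; `f̃_i^*` increases `a_{i,l_f+1}` by 1 and
decreases `a_{i+1,l_f+1}` by 1 (discarded if `l_f = i`). -/
theorem stmt2 (n : ℕ) (hn : 1 ≤ n) (a : ℤ → ℤ → ℤ)
    (hnn : ∀ k l : ℤ, 0 ≤ a k l)
    (hsupp : ∀ k l : ℤ, ¬(1 ≤ k ∧ k < l ∧ l ≤ (n : ℤ) + 1) → a k l = 0)
    (i : ℤ) (hi1 : 1 ≤ i) (hi2 : i ≤ (n : ℤ))
    (A : ℤ → ℤ) (hA : ∀ k, A k = ∑ s ∈ Finset.Icc 1 k, (a s (i + 1) - a (s - 1) i))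
    (ε : ℤ) (hub : ∀ k ∈ Finset.Icc 1 i, A k ≤ ε)
    (hmem : ∃ k ∈ Finset.Icc 1 i, A k = ε)
    (Astar : ℤ → ℤ)
    (hAstar : ∀ l, Astar l = ∑ t ∈ Finset.Icc (l + 1) ((n : ℤ) + 1), (a i t - a (i + 1) (t + 1)))
    (εs : ℤ) (hubs : ∀ l ∈ Finset.Icc i (n : ℤ), Astar l ≤ εs)
    (hmems : ∃ l ∈ Finset.Icc i (n : ℤ), Astar l = εs)
    (kf : ℤ) (hkf : kf ∈ Finset.Icc 1 i) (hkfval : A kf = ε)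
    (hkfmax : ∀ k ∈ Finset.Icc 1 i, A k = ε → k ≤ kf)
    (lf : ℤ) (hlf : lf ∈ Finset.Icc i (n : ℤ)) (hlfval : Astar lf = εs)
    (hlfmin : ∀ l ∈ Finset.Icc i (n : ℤ), Astar l = εs → lf ≤ l) :
    (kf < i → 1 ≤ a kf i) ∧
    (i < lf → 1 ≤ a (i + 1) (lf + 1)) ∧
    (∀ k l : ℤ,
      0 ≤ (if k = kf ∧ l = i ∧ kf < i then a k l - 1
           else if k = kf ∧ l = i + 1 then a k l + 1
           else a k l)) ∧
    (∀ k l : ℤ,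
      0 ≤ (if k = i ∧ l = lf + 1 then a k l + 1
           else if k = i + 1 ∧ l = lf + 1 ∧ i < lf then a k l - 1
           else a k l)) := by
  have hk := Finset.mem_Icc.mp hkf
  have hl := Finset.mem_Icc.mp hlf
  have h1 : kf < i → 1 ≤ a kf i := by
    intro hlt
    have hm : kf + 1 ∈ Finset.Icc 1 i := Finset.mem_Icc.mpr (by omega)
    have e : Finset.Icc 1 (kf + 1) = insert (kf + 1) (Finset.Icc 1 kf) := by
      ext x; simp only [Finset.mem_Icc, Finset.mem_insert]; omega
    have hs : A (kf + 1) = a (kf + 1) (i + 1) - a kf i + A kf := by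
      rw [hA (kf + 1), e, Finset.sum_insert (by simp), ← hA kf, add_sub_cancel_right]
    have h2 := hub _ hm
    have h3 := hkfmax _ hm
    have h4 := hnn (kf + 1) (i + 1)
    by_contra hc
    have := h3 (by omega)
    omega
  have h2 : i < lf → 1 ≤ a (i + 1) (lf + 1) := by
    intro hlt
    have hm : lf - 1 ∈ Finset.Icc i (n : ℤ) := Finset.mem_Icc.mpr (by omega)
    have e : Finset.Icc (lf - 1 + 1) ((n : ℤ) + 1)
        = insert lf (Finset.Icc (lf + 1) ((n : ℤ) + 1)) := by
      ext x; simp only [Finset.mem_Icc, Finset.mem_insert]; omega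
    have hs : Astar (lf - 1) = a i lf - a (i + 1) (lf + 1) + Astar lf := by
      rw [hAstar (lf - 1), e, Finset.sum_insert (by simp), ← hAstar lf]
    have h2 := hubs _ hm
    have h3 := hlfmin _ hm
    have h4 := hnn i lf
    by_contra hc
    have := h3 (by omega)
    omega
  refine ⟨h1, h2, fun k l => ?_, fun k l => ?_⟩
  · have := hnn k l
    split_ifs with c d
    · obtain ⟨rfl, rfl, c⟩ := c
      have := h1 c
      omega
    · omega
    · omega
  · have := hnn k l
    split_ifs with c d
    · omega
    · obtain ⟨rfl, rfl, d⟩ := d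
      have := h2 d
      omega
    · omega
end

section
/- The data (ℬ, wt, ε_i, φ_i, ẽ_i, f̃_i) form a crystal. Concretely, for every a ∈ ℬ and i ∈ I: (i) m_i(f̃_i a) = m_i(a) + 1 and m_j(f̃_i a) = m_j(a) for j ≠ i (i.e. wt(f̃_i a) = wt(a) − α_i), ε_i(f̃_i a) = ε_i(a) + 1, and ẽ_i(f̃_i a) = a; (ii) if ε_i(a) > 0 then m_i(ẽ_i a) = m_i(a) − 1 and m_j(ẽ_i a) = m_j(a) for j ≠ i (i.e. wt(ẽ_i a) = wt(a) + α_i), ε_i(ẽ_i a) = ε_i(a) − 1, and f̃_i(ẽ_i a) = a. -/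
namespace Stmt3

/-- `A_k^{(i)}(a) = Σ_{s=1}^{k} (a_{s,i+1} − a_{s−1,i})`. -/
noncomputable def A (a : ℤ → ℤ → ℤ) (i k : ℤ) : ℤ :=
  ∑ s ∈ Finset.Icc 1 k, (a s (i + 1) - a (s - 1) i)

/-- `ε_i(a) = max{A_1^{(i)}(a),…,A_i^{(i)}(a)}`. -/
noncomputable def eps (a : ℤ → ℤ → ℤ) (i : ℤ) : ℤ :=
  ((Finset.Icc 1 i).image (A a i)).max.unbotD 0

/-- `k_e(a,i)`: the minimal `k ∈ [1,i]` with `A_k^{(i)}(a) = ε_i(a)`. -/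
noncomputable def ke (a : ℤ → ℤ → ℤ) (i : ℤ) : ℤ :=
  (((Finset.Icc 1 i).filter fun k => A a i k = eps a i).min).untopD 0

/-- `k_f(a,i)`: the maximal `k ∈ [1,i]` with `A_k^{(i)}(a) = ε_i(a)`. -/
noncomputable def kf (a : ℤ → ℤ → ℤ) (i : ℤ) : ℤ :=
  (((Finset.Icc 1 i).filter fun k => A a i k = eps a i).max).unbotD 0

/-- The lowering operator `f̃_i`: decrease `a_{k_f,i}` by 1 (discarded when `k_f = i`, the
entry being out of range) and increase `a_{k_f,i+1}` by 1. -/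
noncomputable def ftil (a : ℤ → ℤ → ℤ) (i : ℤ) : ℤ → ℤ → ℤ := fun k l =>
  if k = kf a i ∧ l = i ∧ kf a i < i then a k l - 1
  else if k = kf a i ∧ l = i + 1 then a k l + 1
  else a k l

/-- The raising operator `ẽ_i` (for `ε_i(a) > 0`): increase `a_{k_e,i}` by 1 (discarded when
`k_e = i`) and decrease `a_{k_e,i+1}` by 1. -/
noncomputable def etil (a : ℤ → ℤ → ℤ) (i : ℤ) : ℤ → ℤ → ℤ := fun k l =>
  if k = ke a i ∧ l = i ∧ ke a i < i then a k l + 1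
  else if k = ke a i ∧ l = i + 1 then a k l - 1
  else a k l

/-- `m_i(a) = Σ_{k=1}^{i} Σ_{l=i+1}^{n+1} a_{k,l}`; the weight of `a` is `(−m_i(a))_i`. -/
noncomputable def m (n : ℕ) (a : ℤ → ℤ → ℤ) (j : ℤ) : ℤ :=
  ∑ k ∈ Finset.Icc 1 j, ∑ l ∈ Finset.Icc (j + 1) ((n : ℤ) + 1), a k l

/-- Perturbation of `a` by `c` at `(p,i+1)` and by `-c` at `(p,i)` (if in range). -/
def pert (a : ℤ → ℤ → ℤ) (i p c : ℤ) : ℤ → ℤ → ℤ := fun k l =>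
  a k l + ((if k = p then (if l = i + 1 then c else 0) else 0)
    - (if k = p then (if l = i then (if p < i then c else 0) else 0) else 0))

lemma ftil_eq (a : ℤ → ℤ → ℤ) (i : ℤ) : ftil a i = pert a i (kf a i) 1 := by
  funext k l
  unfold ftil pert
  split_ifs <;> first | omega | (exfalso; tauto)

lemma etil_eq (a : ℤ → ℤ → ℤ) (i : ℤ) : etil a i = pert a i (ke a i) (-1) := by
  funext k l
  unfold etil pert
  split_ifs <;> first | omega | (exfalso; tauto)

lemma pert_pert (a : ℤ → ℤ → ℤ) (i p c : ℤ) : pert (pert a i p c) i p (-c) = a := by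
  funext k l
  unfold pert
  split_ifs <;> omega

lemma A_pert (a : ℤ → ℤ → ℤ) (i p c k : ℤ) (hp : 1 ≤ p) (hk : k ≤ i) :
    A (pert a i p c) i k = A a i k + (if p ≤ k then c else 0) + (if p < k then c else 0) := by
  have h : ∀ s ∈ Finset.Icc 1 k, pert a i p c s (i + 1) - pert a i p c (s - 1) i =
      (a s (i + 1) - a (s - 1) i) + (if s = p then c else 0)
        + (if s = p + 1 then c else 0) := by
    intro s hs
    rw [Finset.mem_Icc] at hs
    unfold pert
    split_ifs <;> omega
  unfold A
  rw [Finset.sum_congr rfl h, Finset.sum_add_distrib, Finset.sum_add_distrib,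
    Finset.sum_ite_eq', Finset.sum_ite_eq']
  simp only [Finset.mem_Icc]
  split_ifs <;> omega

lemma m_pert (n : ℕ) (a : ℤ → ℤ → ℤ) (i p c j : ℤ) (hp : 1 ≤ p) (hpi : p ≤ i)
    (hi : i ≤ (n : ℤ)) :
    m n (pert a i p c) j = m n a j + (if j = i then c else 0) := by
  have h : ∀ k ∈ Finset.Icc 1 j,
      ∑ l ∈ Finset.Icc (j + 1) ((n : ℤ) + 1), pert a i p c k l =
      ∑ l ∈ Finset.Icc (j + 1) ((n : ℤ) + 1), a k l +
        (if k = p then (if j = i then c else 0) else 0) := by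
    intro k hk
    rw [Finset.mem_Icc] at hk
    unfold pert
    rw [Finset.sum_add_distrib, Finset.sum_sub_distrib]
    by_cases hkp : k = p
    · simp only [hkp, if_true, Finset.sum_ite_eq', Finset.mem_Icc]
      split_ifs <;> omega
    · simp [hkp]
  unfold m
  rw [Finset.sum_congr rfl h, Finset.sum_add_distrib, Finset.sum_ite_eq']
  simp only [Finset.mem_Icc]
  split_ifs <;> omega

lemma eps_of (a : ℤ → ℤ → ℤ) (i p e : ℤ) (h1 : 1 ≤ p) (h2 : p ≤ i) (he : A a i p = e)
    (hle : ∀ k, 1 ≤ k → k ≤ i → A a i k ≤ e) : eps a i = e := by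
  have : ((Finset.Icc 1 i).image (A a i)).max = (e : WithBot ℤ) := by
    apply le_antisymm
    · apply Finset.max_le
      intro x hx
      obtain ⟨k, hk, rfl⟩ := Finset.mem_image.1 hx
      rw [Finset.mem_Icc] at hk
      exact WithBot.coe_le_coe.2 (hle k hk.1 hk.2)
    · apply Finset.le_max
      exact Finset.mem_image.2 ⟨p, Finset.mem_Icc.2 ⟨h1, h2⟩, he⟩
  unfold eps
  rw [this]
  rfl

lemma eps_spec (a : ℤ → ℤ → ℤ) (i : ℤ) (hi : 1 ≤ i) :
    (∃ p, 1 ≤ p ∧ p ≤ i ∧ A a i p = eps a i) ∧ ∀ k, 1 ≤ k → k ≤ i → A a i k ≤ eps a i := by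
  obtain ⟨p, hp, hmax⟩ := Finset.exists_max_image (Finset.Icc 1 i) (A a i)
    ⟨1, Finset.mem_Icc.2 ⟨le_refl _, hi⟩⟩
  rw [Finset.mem_Icc] at hp
  have hle : ∀ k, 1 ≤ k → k ≤ i → A a i k ≤ A a i p :=
    fun k h1 h2 => hmax k (Finset.mem_Icc.2 ⟨h1, h2⟩)
  have := eps_of a i p _ hp.1 hp.2 rfl hle
  rw [this]
  exact ⟨⟨p, hp.1, hp.2, rfl⟩, hle⟩

lemma kf_spec (a : ℤ → ℤ → ℤ) (i : ℤ) (hi : 1 ≤ i) :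
    1 ≤ kf a i ∧ kf a i ≤ i ∧ A a i (kf a i) = eps a i ∧
      ∀ k, kf a i < k → k ≤ i → A a i k < eps a i := by
  obtain ⟨⟨p, h1, h2, h3⟩, hle⟩ := eps_spec a i hi
  obtain ⟨q, hq⟩ := Finset.max_of_mem
    (s := (Finset.Icc 1 i).filter fun k => A a i k = eps a i) (a := p)
    (Finset.mem_filter.2 ⟨Finset.mem_Icc.2 ⟨h1, h2⟩, h3⟩)
  have hk : kf a i = q := by unfold kf; rw [hq]; rfl
  have hm := Finset.mem_of_max hq
  rw [Finset.mem_filter, Finset.mem_Icc] at hm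
  rw [hk]
  refine ⟨hm.1.1, hm.1.2, hm.2, fun k hqk hki => ?_⟩
  refine lt_of_le_of_ne (hle k (by omega) hki) fun h => ?_
  have := Finset.le_max_of_eq
    (Finset.mem_filter.2 ⟨Finset.mem_Icc.2 ⟨(by omega : 1 ≤ k), hki⟩, h⟩) hq
  omega

lemma ke_spec (a : ℤ → ℤ → ℤ) (i : ℤ) (hi : 1 ≤ i) :
    1 ≤ ke a i ∧ ke a i ≤ i ∧ A a i (ke a i) = eps a i ∧
      ∀ k, 1 ≤ k → k < ke a i → A a i k < eps a i := by
  obtain ⟨⟨p, h1, h2, h3⟩, hle⟩ := eps_spec a i hi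
  obtain ⟨q, hq⟩ := Finset.min_of_mem
    (s := (Finset.Icc 1 i).filter fun k => A a i k = eps a i) (a := p)
    (Finset.mem_filter.2 ⟨Finset.mem_Icc.2 ⟨h1, h2⟩, h3⟩)
  have hk : ke a i = q := by unfold ke; rw [hq]; rfl
  have hm := Finset.mem_of_min hq
  rw [Finset.mem_filter, Finset.mem_Icc] at hm
  rw [hk]
  refine ⟨hm.1.1, hm.1.2, hm.2, fun k h1k hqk => ?_⟩
  refine lt_of_le_of_ne (hle k h1k (by omega)) fun h => ?_
  have := Finset.min_le_of_eq
    (Finset.mem_filter.2 ⟨Finset.mem_Icc.2 ⟨h1k, (by omega : k ≤ i)⟩, h⟩) hq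
  omega

/-- `(ℬ, wt, ε_i, φ_i, ẽ_i, f̃_i)` is a crystal: for every Lusztig datum `a`
and `i ∈ [1,n]`, (i) `wt(f̃_i a) = wt(a) − α_i`, `ε_i(f̃_i a) = ε_i(a) + 1`, and
`ẽ_i (f̃_i a) = a`; (ii) if `ε_i(a) > 0` then `wt(ẽ_i a) = wt(a) + α_i`,
`ε_i(ẽ_i a) = ε_i(a) − 1`, and `f̃_i (ẽ_i a) = a`. -/
theorem stmt3 (n : ℕ) (hn : 1 ≤ n) (a : ℤ → ℤ → ℤ)
    (hnn : ∀ k l : ℤ, 0 ≤ a k l)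
    (hsupp : ∀ k l : ℤ, ¬(1 ≤ k ∧ k < l ∧ l ≤ (n : ℤ) + 1) → a k l = 0)
    (i : ℤ) (hi1 : 1 ≤ i) (hi2 : i ≤ (n : ℤ)) :
    (m n (ftil a i) i = m n a i + 1 ∧
      (∀ j : ℤ, 1 ≤ j → j ≤ (n : ℤ) → j ≠ i → m n (ftil a i) j = m n a j) ∧
      eps (ftil a i) i = eps a i + 1 ∧
      etil (ftil a i) i = a) ∧
    (0 < eps a i →
      m n (etil a i) i = m n a i - 1 ∧
      (∀ j : ℤ, 1 ≤ j → j ≤ (n : ℤ) → j ≠ i → m n (etil a i) j = m n a j) ∧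
      eps (etil a i) i = eps a i - 1 ∧
      ftil (etil a i) i = a) := by
  obtain ⟨f1, f2, f3, f4⟩ := kf_spec a i hi1
  obtain ⟨e1, e2, e3, e4⟩ := ke_spec a i hi1
  obtain ⟨-, hle⟩ := eps_spec a i hi1
  rw [ftil_eq a, etil_eq a]
  constructor
  · generalize kf a i = p at *
    have hA := fun k hk => A_pert a i p 1 k f1 hk
    have hE : eps (pert a i p 1) i = eps a i + 1 := by
      refine eps_of _ i p _ f1 f2 ?_ ?_
      · rw [hA p f2, f3]; simp
      · intro k h1 h2
        rw [hA k h2]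
        have := hle k h1 h2
        have := f4 k
        split_ifs <;> omega
    have hK : ke (pert a i p 1) i = p := by
      obtain ⟨g1, g2, g3, g4⟩ := ke_spec (pert a i p 1) i hi1
      rw [hE] at g3 g4
      generalize ke (pert a i p 1) i = q at *
      rw [hA q g2] at g3
      have hq := hle q g1 g2
      rcases lt_trichotomy q p with h | h | h
      · rw [if_neg (by omega), if_neg (by omega)] at g3; omega
      · exact h
      · have := g4 p f1 h
        rw [hA p f2, f3] at this
        simp at this
    refine ⟨?_, ?_, hE, ?_⟩
    · rw [m_pert n a i p 1 i f1 f2 hi2, if_pos rfl]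
    · intro j _ _ hj
      rw [m_pert n a i p 1 j f1 f2 hi2, if_neg hj, add_zero]
    · rw [etil_eq, hK, pert_pert]
  · intro _
    generalize ke a i = p at *
    have hA := fun k hk => A_pert a i p (-1) k e1 hk
    have hE : eps (pert a i p (-1)) i = eps a i - 1 := by
      refine eps_of _ i p _ e1 e2 ?_ ?_
      · rw [hA p e2, e3]; simp; rfl
      · intro k h1 h2
        rw [hA k h2]
        have := hle k h1 h2
        have := e4 k h1
        split_ifs <;> omega
    have hK : kf (pert a i p (-1)) i = p := by
      obtain ⟨g1, g2, g3, g4⟩ := kf_spec (pert a i p (-1)) i hi1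
      rw [hE] at g3 g4
      generalize kf (pert a i p (-1)) i = q at *
      rw [hA q g2] at g3
      have hq := hle q g1 g2
      rcases lt_trichotomy q p with h | h | h
      · have := g4 p h e2
        rw [hA p e2, e3, if_pos le_rfl, if_neg (lt_irrefl p)] at this
        omega
      · exact h
      · rw [if_pos (by omega), if_pos h] at g3; omega
    refine ⟨?_, ?_, hE, ?_⟩
    · rw [m_pert n a i p (-1) i e1 e2 hi2, if_pos rfl]; rfl
    · intro j _ _ hj
      rw [m_pert n a i p (-1) j e1 e2 hi2, if_neg hj, add_zero]
    · rw [ftil_eq, hK]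
      exact pert_pert a i p (-1)

end Stmt3
end

section
/- The data (ℬ, wt, ε_i^*, φ_i^*, ẽ_i^*, f̃_i^*) form a crystal. Concretely, for every a ∈ ℬ and i ∈ I: (i) m_i(f̃_i^* a) = m_i(a) + 1 and m_j(f̃_i^* a) = m_j(a) for j ≠ i (i.e. wt(f̃_i^* a) = wt(a) − α_i), ε_i^*(f̃_i^* a) = ε_i^*(a) + 1, and ẽ_i^*(f̃_i^* a) = a; (ii) if ε_i^*(a) > 0 then m_i(ẽ_i^* a) = m_i(a) − 1 and m_j(ẽ_i^* a) = m_j(a) for j ≠ i (i.e. wt(ẽ_i^* a) = wt(a) + α_i), ε_i^*(ẽ_i^* a) = ε_i^*(a) − 1, and f̃_i^*(ẽ_i^* a) = a. -/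
namespace Stmt4

/-- `A_l^{*(i)}(a) = Σ_{t=l+1}^{n+1} (a_{i,t} − a_{i+1,t+1})`. -/
noncomputable def Astar (n : ℕ) (a : ℤ → ℤ → ℤ) (i l : ℤ) : ℤ :=
  ∑ t ∈ Finset.Icc (l + 1) ((n : ℤ) + 1), (a i t - a (i + 1) (t + 1))

/-- `ε_i^*(a) = max{A_i^{*(i)}(a),…,A_n^{*(i)}(a)}`. -/
noncomputable def epsStar (n : ℕ) (a : ℤ → ℤ → ℤ) (i : ℤ) : ℤ :=
  ((Finset.Icc i (n : ℤ)).image (Astar n a i)).max.unbotD 0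

/-- `l_e(a,i)`: the maximal `l ∈ [i,n]` with `A_l^{*(i)}(a) = ε_i^*(a)`. -/
noncomputable def leStar (n : ℕ) (a : ℤ → ℤ → ℤ) (i : ℤ) : ℤ :=
  (((Finset.Icc i (n : ℤ)).filter fun l => Astar n a i l = epsStar n a i).max).unbotD 0

/-- `l_f(a,i)`: the minimal `l ∈ [i,n]` with `A_l^{*(i)}(a) = ε_i^*(a)`. -/
noncomputable def lfStar (n : ℕ) (a : ℤ → ℤ → ℤ) (i : ℤ) : ℤ :=
  (((Finset.Icc i (n : ℤ)).filter fun l => Astar n a i l = epsStar n a i).min).untopD 0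

/-- The lowering operator `f̃_i^*`: increase `a_{i,l_f+1}` by 1 and decrease
`a_{i+1,l_f+1}` by 1 (discarded when `l_f = i`, the entry `(i+1,i+1)` being out of range). -/
noncomputable def ftilStar (n : ℕ) (a : ℤ → ℤ → ℤ) (i : ℤ) : ℤ → ℤ → ℤ := fun k l =>
  if k = i ∧ l = lfStar n a i + 1 then a k l + 1
  else if k = i + 1 ∧ l = lfStar n a i + 1 ∧ i < lfStar n a i then a k l - 1
  else a k l

/-- The raising operator `ẽ_i^*` (for `ε_i^*(a) > 0`): decrease `a_{i,l_e+1}` by 1 and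
increase `a_{i+1,l_e+1}` by 1 (discarded when `l_e = i`). -/
noncomputable def etilStar (n : ℕ) (a : ℤ → ℤ → ℤ) (i : ℤ) : ℤ → ℤ → ℤ := fun k l =>
  if k = i ∧ l = leStar n a i + 1 then a k l - 1
  else if k = i + 1 ∧ l = leStar n a i + 1 ∧ i < leStar n a i then a k l + 1
  else a k l

/-- `m_i(a) = Σ_{k=1}^{i} Σ_{l=i+1}^{n+1} a_{k,l}`; the weight of `a` is `(−m_i(a))_i`. -/
noncomputable def m (n : ℕ) (a : ℤ → ℤ → ℤ) (j : ℤ) : ℤ :=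
  ∑ k ∈ Finset.Icc 1 j, ∑ l ∈ Finset.Icc (j + 1) ((n : ℤ) + 1), a k l

theorem epsStar_eq (n : ℕ) (a : ℤ → ℤ → ℤ) (i p e : ℤ) (h1 : i ≤ p) (h2 : p ≤ n)
    (hp : Astar n a i p = e) (hle : ∀ l, i ≤ l → l ≤ n → Astar n a i l ≤ e) :
    epsStar n a i = e := by
  have : ((Finset.Icc i (n : ℤ)).image (Astar n a i)).max = (e : WithBot ℤ) := by
    apply le_antisymm
    · apply Finset.max_le
      intro x hx
      simp only [Finset.mem_image, Finset.mem_Icc] at hx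
      obtain ⟨l, ⟨ha, hb⟩, rfl⟩ := hx
      exact_mod_cast hle l ha hb
    · apply Finset.le_max
      exact Finset.mem_image.2 ⟨p, Finset.mem_Icc.2 ⟨h1, h2⟩, hp⟩
  rw [epsStar, this]; rfl

theorem leStar_eq (n : ℕ) (a : ℤ → ℤ → ℤ) (i p : ℤ) (h1 : i ≤ p) (h2 : p ≤ n)
    (hp : Astar n a i p = epsStar n a i)
    (hle : ∀ l, i ≤ l → l ≤ n → Astar n a i l = epsStar n a i → l ≤ p) :
    leStar n a i = p := by
  have : (((Finset.Icc i (n : ℤ)).filter fun l => Astar n a i l = epsStar n a i).max)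
      = (p : WithBot ℤ) := by
    apply le_antisymm
    · apply Finset.max_le
      intro x hx
      simp only [Finset.mem_filter, Finset.mem_Icc] at hx
      exact_mod_cast hle x hx.1.1 hx.1.2 hx.2
    · apply Finset.le_max
      simp [h1, h2, hp]
  rw [leStar, this]; rfl

theorem lfStar_eq (n : ℕ) (a : ℤ → ℤ → ℤ) (i p : ℤ) (h1 : i ≤ p) (h2 : p ≤ n)
    (hp : Astar n a i p = epsStar n a i)
    (hle : ∀ l, i ≤ l → l ≤ n → Astar n a i l = epsStar n a i → p ≤ l) :
    lfStar n a i = p := by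
  have : (((Finset.Icc i (n : ℤ)).filter fun l => Astar n a i l = epsStar n a i).min)
      = (p : WithTop ℤ) := by
    apply le_antisymm
    · apply Finset.min_le
      simp [h1, h2, hp]
    · apply Finset.le_min
      intro x hx
      simp only [Finset.mem_filter, Finset.mem_Icc] at hx
      exact_mod_cast hle x hx.1.1 hx.1.2 hx.2
  rw [lfStar, this]; rfl

theorem eps_spec (n : ℕ) (a : ℤ → ℤ → ℤ) (i : ℤ) (hi : i ≤ n) :
    (∃ p, i ≤ p ∧ p ≤ n ∧ Astar n a i p = epsStar n a i) ∧
      ∀ l, i ≤ l → l ≤ n → Astar n a i l ≤ epsStar n a i := by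
  obtain ⟨p, hp, hm⟩ := Finset.exists_max_image (Finset.Icc i (n : ℤ)) (Astar n a i)
    ⟨i, Finset.mem_Icc.2 ⟨le_rfl, hi⟩⟩
  simp only [Finset.mem_Icc] at hp hm
  have := epsStar_eq n a i p _ hp.1 hp.2 rfl (fun l h1 h2 => hm l ⟨h1, h2⟩)
  rw [this]
  exact ⟨⟨p, hp.1, hp.2, rfl⟩, fun l h1 h2 => hm l ⟨h1, h2⟩⟩

theorem le_spec (n : ℕ) (a : ℤ → ℤ → ℤ) (i : ℤ) (hi : i ≤ n) :
    i ≤ leStar n a i ∧ leStar n a i ≤ n ∧ Astar n a i (leStar n a i) = epsStar n a i ∧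
      ∀ l, i ≤ l → l ≤ n → Astar n a i l = epsStar n a i → l ≤ leStar n a i := by
  obtain ⟨⟨p, h1, h2, h3⟩, -⟩ := eps_spec n a i hi
  obtain ⟨q, hq, hm⟩ := Finset.exists_max_image
    ((Finset.Icc i (n : ℤ)).filter fun l => Astar n a i l = epsStar n a i) id
    ⟨p, by simp [h1, h2, h3]⟩
  simp only [Finset.mem_filter, Finset.mem_Icc, id] at hq hm
  have := leStar_eq n a i q hq.1.1 hq.1.2 hq.2 (fun l h1 h2 h3 => hm l ⟨⟨h1, h2⟩, h3⟩)
  rw [this]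
  exact ⟨hq.1.1, hq.1.2, hq.2, fun l h1 h2 h3 => hm l ⟨⟨h1, h2⟩, h3⟩⟩

theorem lf_spec (n : ℕ) (a : ℤ → ℤ → ℤ) (i : ℤ) (hi : i ≤ n) :
    i ≤ lfStar n a i ∧ lfStar n a i ≤ n ∧ Astar n a i (lfStar n a i) = epsStar n a i ∧
      ∀ l, i ≤ l → l ≤ n → Astar n a i l = epsStar n a i → lfStar n a i ≤ l := by
  obtain ⟨⟨p, h1, h2, h3⟩, -⟩ := eps_spec n a i hi
  obtain ⟨q, hq, hm⟩ := Finset.exists_min_image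
    ((Finset.Icc i (n : ℤ)).filter fun l => Astar n a i l = epsStar n a i) id
    ⟨p, by simp [h1, h2, h3]⟩
  simp only [Finset.mem_filter, Finset.mem_Icc, id] at hq hm
  have := lfStar_eq n a i q hq.1.1 hq.1.2 hq.2 (fun l h1 h2 h3 => hm l ⟨⟨h1, h2⟩, h3⟩)
  rw [this]
  exact ⟨hq.1.1, hq.1.2, hq.2, fun l h1 h2 h3 => hm l ⟨⟨h1, h2⟩, h3⟩⟩

/-- The common perturbation performed by both operators. -/
def pert (a : ℤ → ℤ → ℤ) (i p c : ℤ) : ℤ → ℤ → ℤ := fun k l =>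
  a k l + ((if k = i then (if l = p + 1 then c else 0) else 0) -
    (if k = i + 1 then (if l = p + 1 then (if i < p then c else 0) else 0) else 0))

theorem Astar_pert (n : ℕ) (a : ℤ → ℤ → ℤ) (i p c l : ℤ) (hl : i ≤ l) (hp : p ≤ n) :
    Astar n (pert a i p c) i l =
      Astar n a i l + (if l ≤ p then c else 0) + (if l < p then c else 0) := by
  have key : ∀ t : ℤ, pert a i p c i t - pert a i p c (i + 1) (t + 1) =
      (a i t - a (i + 1) (t + 1)) + (if t = p + 1 then c else 0) +
        (if t = p then (if i < p then c else 0) else 0) := by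
    intro t
    simp only [pert]
    split_ifs <;> omega
  simp only [Astar, key, Finset.sum_add_distrib, Finset.sum_ite_eq', Finset.mem_Icc]
  split_ifs <;> omega

theorem m_pert (n : ℕ) (a : ℤ → ℤ → ℤ) (i p c j : ℤ) (hi : 1 ≤ i) (hip : i ≤ p) (hp : p ≤ n) :
    m n (pert a i p c) j = m n a j + (if j = i then c else 0) := by
  have key : ∀ k : ℤ, ∑ l ∈ Finset.Icc (j + 1) ((n : ℤ) + 1), pert a i p c k l =
      ∑ l ∈ Finset.Icc (j + 1) ((n : ℤ) + 1), a k l +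
      ((if k = i then (if j ≤ p then c else 0) else 0) -
        (if k = i + 1 then (if j ≤ p then (if i < p then c else 0) else 0) else 0)) := by
    intro k
    simp only [pert, Finset.sum_add_distrib, Finset.sum_sub_distrib]
    by_cases h1 : k = i
    · by_cases h2 : k = i + 1
      · omega
      · simp only [h1, if_true, Finset.sum_ite_eq', Finset.mem_Icc]
        simp
        grind
    · by_cases h2 : k = i + 1
      · simp only [h2, if_true, Finset.sum_ite_eq', Finset.mem_Icc]
        simp
        grind
      · simp [h1, h2]
  simp only [m, key, Finset.sum_add_distrib, Finset.sum_sub_distrib, Finset.sum_ite_eq',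
    Finset.mem_Icc]
  split_ifs <;> omega

theorem ftil_eq (n : ℕ) (a : ℤ → ℤ → ℤ) (i : ℤ) :
    ftilStar n a i = pert a i (lfStar n a i) 1 := by
  funext k l
  simp only [ftilStar, pert]
  split_ifs <;> omega

theorem etil_eq (n : ℕ) (a : ℤ → ℤ → ℤ) (i : ℤ) :
    etilStar n a i = pert a i (leStar n a i) (-1) := by
  funext k l
  simp only [etilStar, pert]
  split_ifs <;> omega

theorem pert_pert (a : ℤ → ℤ → ℤ) (i p c d : ℤ) (h : c + d = 0) :
    pert (pert a i p c) i p d = a := by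
  funext k l
  simp only [pert]
  split_ifs <;> omega

/-- `(ℬ, wt, ε_i^*, φ_i^*, ẽ_i^*, f̃_i^*)` is a crystal: for every Lusztig
datum `a` and `i ∈ [1,n]`, (i) `wt(f̃_i^* a) = wt(a) − α_i`, `ε_i^*(f̃_i^* a) = ε_i^*(a)+1`,
and `ẽ_i^* (f̃_i^* a) = a`; (ii) if `ε_i^*(a) > 0` then `wt(ẽ_i^* a) = wt(a) + α_i`,
`ε_i^*(ẽ_i^* a) = ε_i^*(a) − 1`, and `f̃_i^* (ẽ_i^* a) = a`. -/
theorem stmt4 (n : ℕ) (hn : 1 ≤ n) (a : ℤ → ℤ → ℤ)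
    (hnn : ∀ k l : ℤ, 0 ≤ a k l)
    (hsupp : ∀ k l : ℤ, ¬(1 ≤ k ∧ k < l ∧ l ≤ (n : ℤ) + 1) → a k l = 0)
    (i : ℤ) (hi1 : 1 ≤ i) (hi2 : i ≤ (n : ℤ)) :
    (m n (ftilStar n a i) i = m n a i + 1 ∧
      (∀ j : ℤ, 1 ≤ j → j ≤ (n : ℤ) → j ≠ i → m n (ftilStar n a i) j = m n a j) ∧
      epsStar n (ftilStar n a i) i = epsStar n a i + 1 ∧
      etilStar n (ftilStar n a i) i = a) ∧
    (0 < epsStar n a i →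
      m n (etilStar n a i) i = m n a i - 1 ∧
      (∀ j : ℤ, 1 ≤ j → j ≤ (n : ℤ) → j ≠ i → m n (etilStar n a i) j = m n a j) ∧
      epsStar n (etilStar n a i) i = epsStar n a i - 1 ∧
      ftilStar n (etilStar n a i) i = a) := by
  constructor
  · obtain ⟨h1, h2, h3, h4⟩ := lf_spec n a i hi2
    have h5 := (eps_spec n a i hi2).2
    rw [ftil_eq]
    set p := lfStar n a i
    have hA := fun l hl => Astar_pert n a i p 1 l hl h2
    have hE : epsStar n (pert a i p 1) i = epsStar n a i + 1 := by
      apply epsStar_eq n _ i p _ h1 h2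
      · rw [hA p h1]; simp [h3]
      · intro l hl hl'
        rw [hA l hl]
        have := h4 l hl hl'
        have := h5 l hl hl'
        split_ifs <;> omega
    refine ⟨?_, ?_, hE, ?_⟩
    · rw [m_pert n a i p 1 i hi1 h1 h2]; simp
    · intro j _ _ hj
      rw [m_pert n a i p 1 j hi1 h1 h2]; simp [hj]
    · have hL : leStar n (pert a i p 1) i = p := by
        apply leStar_eq n _ i p h1 h2
        · rw [hA p h1, hE]; simp [h3]
        · intro l hl hl'
          rw [hA l hl, hE]
          have := h5 l hl hl'
          split_ifs <;> omega
      rw [etil_eq, hL]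
      exact pert_pert a i p 1 (-1) (by norm_num)
  · intro _
    obtain ⟨h1, h2, h3, h4⟩ := le_spec n a i hi2
    have h5 := (eps_spec n a i hi2).2
    rw [etil_eq]
    set p := leStar n a i
    have hA := fun l hl => Astar_pert n a i p (-1) l hl h2
    have hE : epsStar n (pert a i p (-1)) i = epsStar n a i - 1 := by
      apply epsStar_eq n _ i p _ h1 h2
      · rw [hA p h1]; simp [h3]; omega
      · intro l hl hl'
        rw [hA l hl]
        have := h4 l hl hl'
        have := h5 l hl hl'
        split_ifs <;> omega
    refine ⟨?_, ?_, hE, ?_⟩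
    · rw [m_pert n a i p (-1) i hi1 h1 h2]; simp; omega
    · intro j _ _ hj
      rw [m_pert n a i p (-1) j hi1 h1 h2]; simp [hj]
    · have hL : lfStar n (pert a i p (-1)) i = p := by
        apply lfStar_eq n _ i p h1 h2
        · rw [hA p h1, hE]; simp [h3]; omega
        · intro l hl hl'
          rw [hA l hl, hE]
          have := h5 l hl hl'
          split_ifs <;> omega
      rw [ftil_eq, hL]
      exact pert_pert a i p (-1) 1 (by norm_num)

end Stmt4
end

section
/- Let M = (M_K)_{K∈M_n^×} be a collection of integers (with the conventions M_∅ = M_{[1,n+1]} = 0). Then M is a w₀-BZ datum (i.e. satisfies (BZ-0)', (BZ-1)' and (BZ-2)') if and only if the following three conditions hold: (i) M_{[n−i+2,n+1]} = 0 for all i ∈ {1,…,n}; (ii) (edge inequalities) for every w ∈ S_{n+1} and every i ∈ {1,…,n}: M_{w[1,i]} + M_{(w s_i)[1,i]} − M_{w[1,i−1]} − M_{w[1,i+1]} ≤ 0; (iii) (3-term relations) for every w ∈ S_{n+1} and every pair i, j ∈ {1,…,n} with |i − j| = 1, w(i) < w(i+1) and w(j) < w(j+1): M_{(w s_i)[1,i]}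 + M_{(w s_j)[1,j]} = min{ M_{w[1,i]} + M_{(w s_i s_j)[1,j]}, M_{w[1,j]} + M_{(w s_j s_i)[1,i]} }. -/
/-- For `w ∈ S_{n+1}` (acting on `{1,…,n+1}`, modeled as permutations of `Fin (n+1)` in
0-indexed form) and `0 ≤ j ≤ n+1`, the set `w[1,j] = {w(1),…,w(j)}`. -/
def wSet (n : ℕ) (w : Equiv.Perm (Fin (n + 1))) (j : ℕ) : Finset (Fin (n + 1)) :=
  (Finset.univ.filter fun x : Fin (n + 1) => (x : ℕ) < j).image w

theorem wSet_zero (n : ℕ) (w : Equiv.Perm (Fin (n + 1))) : wSet n w 0 = ∅ := by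
  simp [wSet]

theorem wSet_succ (n : ℕ) (w : Equiv.Perm (Fin (n + 1))) (j : ℕ) (hj : j < n + 1) :
    wSet n w (j + 1) = insert (w ⟨j, hj⟩) (wSet n w j) := by
  unfold wSet
  rw [← Finset.image_insert]
  congr 1
  ext x
  simp only [Finset.mem_filter, Finset.mem_univ, true_and, Finset.mem_insert, Fin.ext_iff]
  omega

theorem notMem_wSet (n : ℕ) (w : Equiv.Perm (Fin (n + 1))) (j k : ℕ) (hj : j < n + 1)
    (hk : k ≤ j) : w ⟨j, hj⟩ ∉ wSet n w k := by
  simp only [wSet, Finset.mem_image, Finset.mem_filter, Finset.mem_univ, true_and, not_exists,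
    not_and]
  intro x hx h
  have := w.injective h
  subst this
  simp at hx
  omega

theorem wSet_swap (n : ℕ) (w : Equiv.Perm (Fin (n + 1))) (j : ℕ) (a b : Fin (n + 1))
    (ha : j ≤ a) (hb : j ≤ b) : wSet n (w * Equiv.swap a b) j = wSet n w j := by
  unfold wSet
  apply Finset.image_congr
  intro x hx
  simp only [Finset.coe_filter, Finset.mem_univ, true_and, Set.mem_ofPred_eq] at hx
  have h1 : x ≠ a := by rintro rfl; omega
  have h2 : x ≠ b := by rintro rfl; omega
  simp [Equiv.swap_apply_of_ne_of_ne h1 h2]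

theorem exists_perm (n : ℕ) (l : List (Fin (n + 1))) (hl : l.Nodup) :
    ∃ w : Equiv.Perm (Fin (n + 1)), ∀ k (h : k < l.length) (h' : k < n + 1),
      w ⟨k, h'⟩ = l[k] := by
  classical
  set L := l ++ (Finset.univ \ l.toFinset).toList with hL
  have hnd : L.Nodup := by
    rw [hL, List.nodup_append']
    refine ⟨hl, Finset.nodup_toList _, ?_⟩
    intro a ha hb
    simp at hb
    exact hb ha
  have hmem : ∀ a, a ∈ L := by
    intro a
    simp only [hL, List.mem_append, Finset.mem_toList, Finset.mem_sdiff, Finset.mem_univ,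
      true_and, List.mem_toFinset]
    exact em _
  let e := hnd.getEquivOfForallMemList L hmem
  have hlen : n + 1 = L.length := by
    have := Fintype.card_congr e
    simpa using this.symm
  refine ⟨(finCongr hlen).trans e, ?_⟩
  intro k h h'
  simp [e, hL, List.getElem_append_left h]

theorem wSet_take (n : ℕ) (w : Equiv.Perm (Fin (n + 1))) (l m : List (Fin (n + 1)))
    (hlen : l.length ≤ n + 1)
    (H : ∀ k (h : k < (l ++ m).length) (h' : k < n + 1), w ⟨k, h'⟩ = (l ++ m)[k]) :
    wSet n w l.length = l.toFinset := by
  induction l using List.reverseRecOn generalizing m with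
  | nil => simp [wSet_zero]
  | append_singleton l a ih =>
    simp only [List.length_append, List.length_singleton] at hlen ⊢
    rw [wSet_succ n w _ (by omega), ih (a :: m) (by omega) (by simpa using H), H _ (by simp)]
    ext x
    simp


theorem exists_perm_set (n : ℕ) (K : Finset (Fin (n + 1))) (m : List (Fin (n + 1)))
    (hm : m.Nodup) (hK : ∀ a ∈ m, a ∉ K) :
    K.card + m.length ≤ n + 1 ∧
    ∃ w : Equiv.Perm (Fin (n + 1)), wSet n w K.card = K ∧
      ∀ k (h : k < m.length) (h' : K.card + k < n + 1), w ⟨K.card + k, h'⟩ = m[k] := by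
  classical
  have hnd : (K.toList ++ m).Nodup := by
    rw [List.nodup_append']
    refine ⟨Finset.nodup_toList _, hm, ?_⟩
    intro a ha hb
    exact hK a hb (by simpa using ha)
  have hle := hnd.length_le_card
  simp at hle
  refine ⟨hle, ?_⟩
  obtain ⟨w, hw⟩ := exists_perm n _ hnd
  refine ⟨w, ?_, ?_⟩
  · have := wSet_take n w K.toList m (by simp; omega) hw
    simpa using this
  · intro k h h'
    rw [hw _ (by simpa using h)]
    simp [List.getElem_append_right]

/-- the six sets attached to positions `p, p+1, p+2` -/
theorem sets_edge (n : ℕ) (w : Equiv.Perm (Fin (n + 1))) (p : ℕ) (hp : p + 1 < n + 1) :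
    wSet n (w * Equiv.swap (⟨p, by omega⟩ : Fin (n + 1)) ⟨p + 1, hp⟩) (p + 1) =
      insert (w ⟨p + 1, hp⟩) (wSet n w p) := by
  rw [wSet_succ n _ p (by omega), wSet_swap _ _ _ _ _ (by simp) (by simp)]
  simp

theorem sets_up (n : ℕ) (w : Equiv.Perm (Fin (n + 1))) (p : ℕ) (hp : p + 2 < n + 1) :
    wSet n (w * Equiv.swap (⟨p, by omega⟩ : Fin (n + 1)) ⟨p + 1, by omega⟩ *
      Equiv.swap (⟨p + 1, by omega⟩ : Fin (n + 1)) ⟨p + 2, hp⟩) (p + 2) =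
      insert (w ⟨p + 1, by omega⟩) (insert (w ⟨p + 2, hp⟩) (wSet n w p)) := by
  rw [sets_edge n _ (p + 1) hp, sets_edge n w p]
  rw [Equiv.Perm.mul_apply, Equiv.swap_apply_of_ne_of_ne (by simp [Fin.ext_iff]; omega) (by simp)]
  exact Finset.insert_comm _ _ _

theorem sets_down (n : ℕ) (w : Equiv.Perm (Fin (n + 1))) (p : ℕ) (hp : p + 2 < n + 1) :
    wSet n (w * Equiv.swap (⟨p + 1, by omega⟩ : Fin (n + 1)) ⟨p + 2, hp⟩ *
      Equiv.swap (⟨p, by omega⟩ : Fin (n + 1)) ⟨p + 1, by omega⟩) (p + 1) =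
      insert (w ⟨p + 2, hp⟩) (wSet n w p) := by
  rw [sets_edge n _ p (by omega), wSet_swap _ _ _ _ _ (by simp) (by simp)]
  simp

/-- a collection of integers `M = (M_K)` indexed by Maya diagrams (with the
conventions `M_∅ = M_{[1,n+1]} = 0`; here the 1-indexed letter `i ∈ [1,n+1]` corresponds to
the element of `Fin (n+1)` with value `i−1`) is a `w₀`-BZ datum — i.e. satisfies (BZ-0)'
(`M_{[n−i+2,n+1]} = 0`), (BZ-1)' and (BZ-2)' — if and only if it satisfies:
(i) the same normalization; (ii) the edge inequalities
`M_{w[1,i]} + M_{(w s_i)[1,i]} − M_{w[1,i−1]} − M_{w[1,i+1]} ≤ 0` for all `w` and `i`; and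
(iii) the 3-term relations for all `w` and all `i,j` with `|i−j| = 1`, `w(i) < w(i+1)` and
`w(j) < w(j+1)`. -/
theorem stmt5 (n : ℕ) (hn : 1 ≤ n) (M : Finset (Fin (n + 1)) → ℤ)
    (hM0 : M ∅ = 0) (hMfull : M Finset.univ = 0) :
    (((∀ i : ℕ, 1 ≤ i → i ≤ n →
          M (Finset.univ.filter fun x : Fin (n + 1) => n + 1 - i ≤ (x : ℕ)) = 0) ∧
      (∀ x y : Fin (n + 1), x ≠ y → ∀ K : Finset (Fin (n + 1)), x ∉ K → y ∉ K →
          M (insert x K) + M (insert y K) ≤ M (insert x (insert y K)) + M K) ∧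
      (∀ x y z : Fin (n + 1), x < y → y < z → ∀ K : Finset (Fin (n + 1)),
          x ∉ K → y ∉ K → z ∉ K →
          M (insert x (insert z K)) + M (insert y K) =
            min (M (insert x (insert y K)) + M (insert z K))
              (M (insert y (insert z K)) + M (insert x K)))) ↔
      ((∀ i : ℕ, 1 ≤ i → i ≤ n →
          M (Finset.univ.filter fun x : Fin (n + 1) => n + 1 - i ≤ (x : ℕ)) = 0) ∧
      (∀ w : Equiv.Perm (Fin (n + 1)), ∀ i : ℕ, ∀ _hi1 : 1 ≤ i, ∀ _hi2 : i ≤ n,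
          M (wSet n w i) +
              M (wSet n (w * Equiv.swap (⟨i - 1, by omega⟩ : Fin (n + 1)) ⟨i, by omega⟩) i) -
              M (wSet n w (i - 1)) - M (wSet n w (i + 1)) ≤ 0) ∧
      (∀ w : Equiv.Perm (Fin (n + 1)), ∀ i j : ℕ,
          ∀ _hi1 : 1 ≤ i, ∀ _hi2 : i ≤ n, ∀ _hj1 : 1 ≤ j, ∀ _hj2 : j ≤ n,
          (i = j + 1 ∨ j = i + 1) →
          w ⟨i - 1, by omega⟩ < w ⟨i, by omega⟩ →
          w ⟨j - 1, by omega⟩ < w ⟨j, by omega⟩ →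
          M (wSet n (w * Equiv.swap (⟨i - 1, by omega⟩ : Fin (n + 1)) ⟨i, by omega⟩) i) +
              M (wSet n (w * Equiv.swap (⟨j - 1, by omega⟩ : Fin (n + 1)) ⟨j, by omega⟩) j) =
            min
              (M (wSet n w i) +
                M (wSet n (w * Equiv.swap (⟨i - 1, by omega⟩ : Fin (n + 1)) ⟨i, by omega⟩ *
                    Equiv.swap (⟨j - 1, by omega⟩ : Fin (n + 1)) ⟨j, by omega⟩) j))
              (M (wSet n w j) +
                M (wSet n (w * Equiv.swap (⟨j - 1, by omega⟩ : Fin (n + 1)) ⟨j, by omega⟩ *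
                    Equiv.swap (⟨i - 1, by omega⟩ : Fin (n + 1)) ⟨i, by omega⟩) i))))) := by
  constructor
  · rintro ⟨h0, h1, h2⟩
    have key : ∀ (w : Equiv.Perm (Fin (n + 1))) (p : ℕ) (hp : p + 2 < n + 1),
        w ⟨p, by omega⟩ < w ⟨p + 1, by omega⟩ → w ⟨p + 1, by omega⟩ < w ⟨p + 2, hp⟩ → _ :=
      fun w p hp ha hb => h2 _ _ _ ha hb (wSet n w p) (notMem_wSet _ _ _ _ _ (by omega))
        (notMem_wSet _ _ _ _ _ (by omega)) (notMem_wSet _ _ _ _ _ (by omega))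
    refine ⟨h0, ?_, ?_⟩
    · intro w i hi1 hi2
      obtain ⟨p, rfl⟩ : ∃ p, i = p + 1 := ⟨i - 1, by omega⟩
      simp only [Nat.add_sub_cancel]
      rw [sets_edge n w p (by omega), wSet_succ n w (p + 1) (by omega),
        wSet_succ n w p (by omega)]
      have := h1 (w ⟨p + 1, by omega⟩) (w ⟨p, by omega⟩) (by simp) (wSet n w p)
        (notMem_wSet _ _ _ _ _ (by omega)) (notMem_wSet _ _ _ _ _ (by omega))
      linarith
    · intro w i j hi1 hi2 hj1 hj2 hij hwi hwj
      rcases hij with rfl | rfl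
      · obtain ⟨p, rfl⟩ : ∃ p, j = p + 1 := ⟨j - 1, by omega⟩
        simp only [Nat.add_sub_cancel] at hwi hwj ⊢
        have := key w p (by omega) hwj hwi
        rw [sets_edge n w p (by omega), sets_edge n w (p + 1) (by omega),
          sets_up n w p (by omega), sets_down n w p (by omega), wSet_succ n w (p + 1) (by omega),
          wSet_succ n w p (by omega)]
        rw [Finset.insert_comm (w ⟨p + 1 + 1, _⟩), Finset.insert_comm (w ⟨p + 1, _⟩) (w ⟨p, _⟩)]
        rw [this, add_comm (M (insert (w ⟨p, _⟩) (wSet n w p)))]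
      · obtain ⟨p, rfl⟩ : ∃ p, i = p + 1 := ⟨i - 1, by omega⟩
        simp only [Nat.add_sub_cancel] at hwi hwj ⊢
        have := key w p (by omega) hwi hwj
        rw [sets_edge n w p (by omega), sets_edge n w (p + 1) (by omega),
          sets_up n w p (by omega), sets_down n w p (by omega), wSet_succ n w (p + 1) (by omega),
          wSet_succ n w p (by omega)]
        rw [Finset.insert_comm (w ⟨p + 1 + 1, _⟩), Finset.insert_comm (w ⟨p + 1, _⟩) (w ⟨p, _⟩)]
        rw [add_comm, this, min_comm, add_comm (M (insert (w ⟨p, _⟩) (wSet n w p)))]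
  · rintro ⟨h0, h1, h2⟩
    refine ⟨h0, ?_, ?_⟩
    · intro x y hxy K hx hy
      obtain ⟨hc, w, hw, hw'⟩ := exists_perm_set n K [y, x] (by simp [hxy.symm]) (by simp [hx, hy])
      simp only [List.length_cons, List.length_nil] at hc
      have e0 := hw' 0 (by simp) (by omega)
      have e1 := hw' 1 (by simp) (by omega)
      simp only [List.getElem_cons_zero, List.getElem_cons_succ, Nat.add_zero] at e0 e1
      have := h1 w (K.card + 1) (by omega) (by omega)
      simp only [Nat.add_sub_cancel] at this
      rw [sets_edge n w _ (by omega), wSet_succ n w (_ + 1) (by omega),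
        wSet_succ n w _ (by omega), hw, e0, e1] at this
      linarith
    · intro x y z hxy hyz K hx hy hz
      obtain ⟨hc, w, hw, hw'⟩ := exists_perm_set n K [x, y, z]
        (by simp [hxy.ne, hyz.ne, (hxy.trans hyz).ne]) (by simp [hx, hy, hz])
      simp only [List.length_cons, List.length_nil] at hc
      have e0 := hw' 0 (by simp) (by omega)
      have e1 := hw' 1 (by simp) (by omega)
      have e2 := hw' 2 (by simp) (by omega)
      simp only [List.getElem_cons_zero, List.getElem_cons_succ, Nat.add_zero] at e0 e1 e2
      have := h2 w (K.card + 1) (K.card + 1 + 1) (by omega) (by omega) (by omega) (by omega)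
        (Or.inr rfl) (by simpa [e0, e1] using hxy) (by simpa [e1, e2] using hyz)
      simp only [Nat.add_sub_cancel] at this
      rw [sets_edge n w _ (by omega), sets_edge n w (_ + 1) (by omega),
        sets_up n w _ (by omega), sets_down n w _ (by omega), wSet_succ n w (_ + 1) (by omega),
        wSet_succ n w _ (by omega), hw, e0, e1, e2] at this
      rw [Finset.insert_comm z, Finset.insert_comm y x] at this
      rw [add_comm, this, min_comm, add_comm (M (insert x K))]
end

section
/- The complementation map * defined by (M*)_K = M_{K^c}, where K^c = [1,n+1] ∖ K, sends every w₀-BZ datum to an e-BZ datum, and it gives a bijection from BZ^{w₀} onto BZ^e whose inverse is given by the same formula (M^e ↦ (K ↦ M^e_{K^c})). -/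
/-- A BZ datum of type `A_n`: a collection of integers `M = (M_K)` indexed by Maya diagrams
`K ⊆ [1,n+1]` (modeled as a total function on `Finset ℕ`, with the conventions
`M_∅ = M_{[1,n+1]} = 0`), satisfying the inequalities (BZ-1)' and the 3-term relations
(BZ-2)'. -/
def IsBZ (n : ℕ) (M : Finset ℕ → ℤ) : Prop :=
  M ∅ = 0 ∧ M (Finset.Icc 1 (n + 1)) = 0 ∧
  (∀ i j : ℕ, ∀ K : Finset ℕ, 1 ≤ i → i ≤ n + 1 → 1 ≤ j → j ≤ n + 1 → i ≠ j →
    K ⊆ Finset.Icc 1 (n + 1) → i ∉ K → j ∉ K →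
    M (insert i K) + M (insert j K) ≤ M (insert i (insert j K)) + M K) ∧
  (∀ i j k : ℕ, ∀ K : Finset ℕ, 1 ≤ i → i < j → j < k → k ≤ n + 1 →
    K ⊆ Finset.Icc 1 (n + 1) → i ∉ K → j ∉ K → k ∉ K →
    M (insert i (insert k K)) + M (insert j K) =
      min (M (insert i (insert j K)) + M (insert k K))
        (M (insert j (insert k K)) + M (insert i K)))

/-- A `w₀`-BZ datum: a BZ datum with `M_{[n−i+2,n+1]} = 0` for all `1 ≤ i ≤ n`. -/
def IsW0BZ (n : ℕ) (M : Finset ℕ → ℤ) : Prop :=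
  IsBZ n M ∧ ∀ i : ℕ, 1 ≤ i → i ≤ n → M (Finset.Icc (n - i + 2) (n + 1)) = 0

/-- An `e`-BZ datum: a BZ datum with `M_{[1,i]} = 0` for all `1 ≤ i ≤ n`. -/
def IsEBZ (n : ℕ) (M : Finset ℕ → ℤ) : Prop :=
  IsBZ n M ∧ ∀ i : ℕ, 1 ≤ i → i ≤ n → M (Finset.Icc 1 i) = 0

theorem ins_sdiff (I S T : Finset ℕ) (a : ℕ) (ha : a ∈ I) (hS : a ∉ S)
    (hT : T = insert a S) : insert a (I \ T) = I \ S := by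
  subst hT
  ext x
  by_cases hx : x = a
  · subst hx; simp [ha, hS]
  · simp [hx]

theorem IsBZ_compl (n : ℕ) (M : Finset ℕ → ℤ) (h : IsBZ n M) :
    IsBZ n fun K => M (Finset.Icc 1 (n + 1) \ K) := by
  obtain ⟨h0, h1, h2, h3⟩ := h
  refine ⟨by simpa using h1, by simpa using h0, ?_, ?_⟩
  · intro i j K hi hi' hj hj' hij hK hiK hjK
    have hiI : i ∈ Finset.Icc 1 (n + 1) := Finset.mem_Icc.2 ⟨hi, hi'⟩
    have hjI : j ∈ Finset.Icc 1 (n + 1) := Finset.mem_Icc.2 ⟨hj, hj'⟩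
    have key := h2 i j (Finset.Icc 1 (n + 1) \ insert i (insert j K)) hi hi' hj hj' hij
      Finset.sdiff_subset (by simp) (by simp)
    generalize Finset.Icc 1 (n + 1) = I at *
    have e1 : insert i (I \ insert i (insert j K)) = I \ insert j K := by
      apply ins_sdiff _ _ _ _ hiI
      · simp [*] <;> omega
      · ext x; simp only [Finset.mem_insert] <;> tauto
    have e2 : insert j (I \ insert i (insert j K)) = I \ insert i K := by
      apply ins_sdiff _ _ _ _ hjI
      · simp [*] <;> omega
      · ext x; simp only [Finset.mem_insert] <;> tauto
    have e3 : insert i (I \ insert i K) = I \ K := by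
      apply ins_sdiff _ _ _ _ hiI
      · simp [*] <;> omega
      · ext x; simp only [Finset.mem_insert] <;> tauto
    rw [e1, e2, e3] at key
    show M _ + M _ ≤ M _ + M _
    linarith
  · intro i j k K hi hij hjk hk hK hiK hjK hkK
    have hiI : i ∈ Finset.Icc 1 (n + 1) := Finset.mem_Icc.2 ⟨hi, by omega⟩
    have hjI : j ∈ Finset.Icc 1 (n + 1) := Finset.mem_Icc.2 ⟨by omega, by omega⟩
    have hkI : k ∈ Finset.Icc 1 (n + 1) := Finset.mem_Icc.2 ⟨by omega, hk⟩
    have key := h3 i j k (Finset.Icc 1 (n + 1) \ insert i (insert j (insert k K))) hi hij hjk hk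
      Finset.sdiff_subset (by simp) (by simp) (by simp)
    generalize Finset.Icc 1 (n + 1) = I at *
    have e1 : insert i (I \ insert i (insert j (insert k K))) = I \ insert j (insert k K) := by
      apply ins_sdiff _ _ _ _ hiI
      · simp [*] <;> omega
      · ext x; simp only [Finset.mem_insert] <;> tauto
    have e2 : insert j (I \ insert i (insert j (insert k K))) = I \ insert i (insert k K) := by
      apply ins_sdiff _ _ _ _ hjI
      · simp [*] <;> omega
      · ext x; simp only [Finset.mem_insert] <;> tauto
    have e3 : insert k (I \ insert i (insert j (insert k K))) = I \ insert i (insert j K) := by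
      apply ins_sdiff _ _ _ _ hkI
      · simp [*] <;> omega
      · ext x; simp only [Finset.mem_insert] <;> tauto
    have e4 : insert i (I \ insert i (insert j K)) = I \ insert j K := by
      apply ins_sdiff _ _ _ _ hiI
      · simp [*] <;> omega
      · ext x; simp only [Finset.mem_insert] <;> tauto
    have e5 : insert i (I \ insert i (insert k K)) = I \ insert k K := by
      apply ins_sdiff _ _ _ _ hiI
      · simp [*] <;> omega
      · ext x; simp only [Finset.mem_insert] <;> tauto
    have e6 : insert j (I \ insert i (insert j K)) = I \ insert i K := by
      apply ins_sdiff _ _ _ _ hjI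
      · simp [*] <;> omega
      · ext x; simp only [Finset.mem_insert] <;> tauto
    rw [e1, e2, e3, e4, e5, e6] at key
    show M _ + M _ = min (M _ + M _) (M _ + M _)
    rw [add_comm, key, min_def, min_def]
    split_ifs <;> linarith

/-- complementation `(M*)_K = M_{K^c}` (with `K^c = [1,n+1] ∖ K`) sends every
`w₀`-BZ datum to an `e`-BZ datum and every `e`-BZ datum to a `w₀`-BZ datum, and the two maps
are mutually inverse (on Maya diagrams `K ⊆ [1,n+1]`, i.e. on the actual data); hence `*`
is a bijection from `BZ^{w₀}` onto `BZ^e` whose inverse is given by the same formula. -/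
theorem stmt6 (n : ℕ) (hn : 1 ≤ n) :
    (∀ M : Finset ℕ → ℤ, IsW0BZ n M → IsEBZ n fun K => M (Finset.Icc 1 (n + 1) \ K)) ∧
    (∀ M : Finset ℕ → ℤ, IsEBZ n M → IsW0BZ n fun K => M (Finset.Icc 1 (n + 1) \ K)) ∧
    (∀ M : Finset ℕ → ℤ, ∀ K : Finset ℕ, K ⊆ Finset.Icc 1 (n + 1) →
      M (Finset.Icc 1 (n + 1) \ (Finset.Icc 1 (n + 1) \ K)) = M K) := by
  refine ⟨?_, ?_, ?_⟩
  · rintro M ⟨h, hw⟩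
    refine ⟨IsBZ_compl n M h, fun i hi hi' => ?_⟩
    have e : Finset.Icc 1 (n + 1) \ Finset.Icc 1 i
        = Finset.Icc (n - (n + 1 - i) + 2) (n + 1) := by
      ext x; simp only [Finset.mem_sdiff, Finset.mem_Icc]; omega
    show M _ = 0
    rw [e]
    exact hw _ (by omega) (by omega)
  · rintro M ⟨h, hw⟩
    refine ⟨IsBZ_compl n M h, fun i hi hi' => ?_⟩
    have e : Finset.Icc 1 (n + 1) \ Finset.Icc (n - i + 2) (n + 1)
        = Finset.Icc 1 (n + 1 - i) := by
      ext x; simp only [Finset.mem_sdiff, Finset.mem_Icc]; omega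
    show M _ = 0
    rw [e]
    exact hw _ (by omega) (by omega)
  · intro M K hK
    rw [Finset.sdiff_sdiff_eq_self hK]
end

section
/- Let M = (M_K) be a w₀-BZ datum and i ∈ {1,…,n}, and set ε_i(M) = −(M_{[1,i]} + M_{[1,i+1]∖{i}} − M_{[1,i+1]} − M_{[1,i−1]}), which is a nonnegative integer. Then: (1) if ε_i(M) > 0, there exists a unique w₀-BZ datum M' with M'_{[1,i]} = M_{[1,i]} + 1 and M'_K = M_K for all K ∈ M_n^× ∖ M_n^×(i); (2) there exists a unique w₀-BZ datum M'' with M''_{[1,i]} = M_{[1,i]} − 1 and M''_K = M_K for all K ∈ M_n^× ∖ M_n^×(i). -/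
set_option linter.unusedSimpArgs false

def T3 (F : Finset ℕ → ℤ) (K : Finset ℕ) (x y z : ℕ) : Prop :=
  F (insert x (insert z K)) + F (insert y K) =
    min (F (insert x (insert y K)) + F (insert z K)) (F (insert y (insert z K)) + F (insert x K))

/-- outside and `{a,b}`-type three-term relations -/
def HT (m a b : ℕ) (F : Finset ℕ → ℤ) : Prop :=
  ∀ x y z : ℕ, ∀ K : Finset ℕ, 1 ≤ x → x < y → y < z → z ≤ m → K ⊆ Finset.Icc 1 m →
    x ∉ K → y ∉ K → z ∉ K →
    ((a ∉ K ∧ a ≠ x ∧ a ≠ y ∧ a ≠ z) ∨ b ∈ K ∨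
      ((a = x ∨ a = y ∨ a = z) ∧ (b = x ∨ b = y ∨ b = z))) → T3 F K x y z

def FT (m : ℕ) (F : Finset ℕ → ℤ) : Prop :=
  ∀ x y z : ℕ, ∀ K : Finset ℕ, 1 ≤ x → x < y → y < z → z ≤ m → K ⊆ Finset.Icc 1 m →
    x ∉ K → y ∉ K → z ∉ K → T3 F K x y z

section core
variable {m a b : ℕ} {F : Finset ℕ → ℤ}

/-- R2, `a < q < r` -/
theorem r2_1 (h : HT m a b F) (ha : 1 ≤ a) (hb : b = a + 1) (q r : ℕ) (K : Finset ℕ)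
    (h1 : b < q) (h2 : q < r) (h3 : r ≤ m) (hK : K ⊆ Finset.Icc 1 m)
    (haK : a ∉ K) (hbK : b ∉ K) (hq : q ∉ K) (hr : r ∉ K) : T3 F K a q r := by
  have e1 := h a b q K (by omega) (by omega) (by omega) (by omega) hK (by grind) (by grind) (by grind) (by grind)
  have e2 := h a b r K (by omega) (by omega) (by omega) (by omega) hK (by grind) (by grind) (by grind) (by grind)
  have e3 := h b q r K (by omega) (by omega) (by omega) (by omega) hK (by grind) (by grind) (by grind) (by grind)
  simp only [T3, Finset.insert_comm] at *
  omega

/-- R2, `q < a < r` -/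
theorem r2_2 (h : HT m a b F) (hb : b = a + 1) (q r : ℕ) (K : Finset ℕ)
    (h0 : 1 ≤ q) (h1 : q < a) (h2 : b < r) (h3 : r ≤ m) (hK : K ⊆ Finset.Icc 1 m)
    (haK : a ∉ K) (hbK : b ∉ K) (hq : q ∉ K) (hr : r ∉ K) : T3 F K q a r := by
  have e1 := h q a b K (by omega) (by omega) (by omega) (by omega) hK (by grind) (by grind) (by grind) (by grind)
  have e2 := h a b r K (by omega) (by omega) (by omega) (by omega) hK (by grind) (by grind) (by grind) (by grind)
  have e3 := h q b r K (by omega) (by omega) (by omega) (by omega) hK (by grind) (by grind) (by grind) (by grind)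
  simp only [T3, Finset.insert_comm] at *
  omega

/-- R2, `q < r < a` -/
theorem r2_3 (h : HT m a b F) (hb : b = a + 1) (q r : ℕ) (K : Finset ℕ)
    (h0 : 1 ≤ q) (h1 : q < r) (h2 : r < a) (h3 : b ≤ m) (hK : K ⊆ Finset.Icc 1 m)
    (haK : a ∉ K) (hbK : b ∉ K) (hq : q ∉ K) (hr : r ∉ K) : T3 F K q r a := by
  have e1 := h q a b K (by omega) (by omega) (by omega) (by omega) hK (by grind) (by grind) (by grind) (by grind)
  have e2 := h r a b (insert q K) (by omega) (by omega) (by omega) (by omega) (by grind) (by grind) (by grind) (by grind) (by grind)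
  have e3 := h q a b (insert r K) (by omega) (by omega) (by omega) (by omega) (by grind) (by grind) (by grind) (by grind) (by grind)
  have e4 := h q r b K (by omega) (by omega) (by omega) (by omega) hK (by grind) (by grind) (by grind) (by grind)
  have e5 := h q r a (insert b K) (by omega) (by omega) (by omega) (by omega) (by grind) (by grind) (by grind) (by grind) (by grind)
  simp only [T3, Finset.insert_comm] at *
  omega

/-- R3, `b < q < r` -/
theorem r3_1 (h : HT m a b F) (ha : 1 ≤ a) (hb : b = a + 1) (q r : ℕ) (K : Finset ℕ)
    (h1 : b < q) (h2 : q < r) (h3 : r ≤ m) (hK : K ⊆ Finset.Icc 1 m)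
    (haK : a ∉ K) (hbK : b ∉ K) (hq : q ∉ K) (hr : r ∉ K) : T3 F (insert a K) b q r := by
  have e1 := h a b q K (by omega) (by omega) (by omega) (by omega) hK (by grind) (by grind) (by grind) (by grind)
  have e2 := h a b r K (by omega) (by omega) (by omega) (by omega) hK (by grind) (by grind) (by grind) (by grind)
  have e3 := h b q r K (by omega) (by omega) (by omega) (by omega) hK (by grind) (by grind) (by grind) (by grind)
  have e4 := h a b r (insert q K) (by omega) (by omega) (by omega) (by omega) (by grind) (by grind) (by grind) (by grind) (by grind)
  have e5 := h a q r (insert b K) (by omega) (by omega) (by omega) (by omega) (by grind) (by grind) (by grind) (by grind) (by grind)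
  have g : F (insert a (insert q K)) + F (insert b (insert r K)) =
    min (F (insert a (insert r K)) + F (insert b (insert q K)))
      (F (insert a (insert b K)) + F (insert q (insert r K))) := by
    clear e4 e5
    simp only [T3, Finset.insert_comm] at *
    omega
  clear e1 e2 e3
  simp only [T3, Finset.insert_comm] at *
  omega

theorem r3_2 (h : HT m a b F) (hb : b = a + 1) (q r : ℕ) (K : Finset ℕ)
    (h0 : 1 ≤ q) (h1 : q < a) (h2 : b < r) (h3 : r ≤ m) (hK : K ⊆ Finset.Icc 1 m)
    (haK : a ∉ K) (hbK : b ∉ K) (hq : q ∉ K) (hr : r ∉ K) : T3 F (insert a K) q b r := by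
  have e1 := h a b r (insert q K) (by omega) (by omega) (by omega) (by omega) (by grind) (by grind) (by grind) (by grind) (by grind)
  have e2 := h q a b (insert r K) (by omega) (by omega) (by omega) (by omega) (by grind) (by grind) (by grind) (by grind) (by grind)
  have e3 := h q a r (insert b K) (by omega) (by omega) (by omega) (by omega) (by grind) (by grind) (by grind) (by grind) (by grind)
  simp only [T3, Finset.insert_comm] at *
  omega

theorem r3_3 (h : HT m a b F) (hb : b = a + 1) (q r : ℕ) (K : Finset ℕ)
    (h0 : 1 ≤ q) (h1 : q < r) (h2 : r < a) (h3 : b ≤ m) (hK : K ⊆ Finset.Icc 1 m)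
    (haK : a ∉ K) (hbK : b ∉ K) (hq : q ∉ K) (hr : r ∉ K) : T3 F (insert a K) q r b := by
  have e1 := h r a b (insert q K) (by omega) (by omega) (by omega) (by omega) (by grind) (by grind) (by grind) (by grind) (by grind)
  have e2 := h q a b (insert r K) (by omega) (by omega) (by omega) (by omega) (by grind) (by grind) (by grind) (by grind) (by grind)
  have e3 := h q r a (insert b K) (by omega) (by omega) (by omega) (by omega) (by grind) (by grind) (by grind) (by grind) (by grind)
  simp only [T3, Finset.insert_comm] at *
  omega

/-- all relations in which `a` is not in `K`. -/
theorem r2_all (h : HT m a b F) (ha : 1 ≤ a) (hb : b = a + 1) (hbm : b ≤ m)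
    (x y z : ℕ) (K : Finset ℕ) (h1 : 1 ≤ x) (h2 : x < y) (h3 : y < z) (h4 : z ≤ m)
    (hK : K ⊆ Finset.Icc 1 m) (hx : x ∉ K) (hy : y ∉ K) (hz : z ∉ K) (haK : a ∉ K) :
    T3 F K x y z := by
  by_cases c : (a ∉ K ∧ a ≠ x ∧ a ≠ y ∧ a ≠ z) ∨ b ∈ K ∨
      ((a = x ∨ a = y ∨ a = z) ∧ (b = x ∨ b = y ∨ b = z))
  · exact h x y z K h1 h2 h3 h4 hK hx hy hz c
  · have hbK : b ∉ K := by tauto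
    have : a = x ∨ a = y ∨ a = z := by tauto
    rcases this with rfl | rfl | rfl
    · exact r2_1 h ha hb y z K (by omega) h3 h4 hK haK hbK hy hz
    · exact r2_2 h hb x z K h1 h2 (by omega) h4 hK haK hbK hx hz
    · exact r2_3 h hb x y K h1 h2 h3 hbm hK haK hbK hx hy

theorem gr (x y z w : ℕ) (K : Finset ℕ) (e1 : T3 F K x y z) (e2 : T3 F K x y w)
    (e3 : T3 F K y z w) :
    F (insert x (insert z K)) + F (insert y (insert w K)) =
    min (F (insert x (insert w K)) + F (insert y (insert z K)))
      (F (insert x (insert y K)) + F (insert z (insert w K))) := by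
  simp only [T3, Finset.insert_comm] at *
  omega

theorem r1_all (h : HT m a b F) (ha : 1 ≤ a) (hb : b = a + 1) (hbm : b ≤ m)
    (p q r : ℕ) (K : Finset ℕ) (h1 : 1 ≤ p) (h2 : p < q) (h3 : q < r) (h4 : r ≤ m)
    (hK : K ⊆ Finset.Icc 1 m) (hp : p ∉ K) (hq : q ∉ K) (hr : r ∉ K) (haK : a ∉ K)
    (hap : a ≠ p) (haq : a ≠ q) (har : a ≠ r) :
    T3 F (insert a K) p q r := by
  have H := r2_all h ha hb hbm
  have HH : ∀ x y z : ℕ, 1 ≤ x → x < y → y < z → z ≤ m → x ∉ K → y ∉ K → z ∉ K → T3 F K x y z :=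
    fun x y z i1 i2 i3 i4 i5 i6 i7 => H x y z K i1 i2 i3 i4 hK i5 i6 i7 haK
  rcases lt_or_gt_of_ne hap with c1 | c1
  · have g := gr (F := F) a p q r K (HH _ _ _ (by omega) (by omega) (by omega) (by omega) haK hp hq)
      (HH _ _ _ (by omega) (by omega) (by omega) (by omega) haK hp hr)
      (HH _ _ _ (by omega) (by omega) (by omega) (by omega) hp hq hr)
    have e1 := H a q r (insert p K) (by omega) (by omega) (by omega) (by omega) (by grind) (by grind) (by grind) (by grind) (by grind)
    have e2 := H a p r (insert q K) (by omega) (by omega) (by omega) (by omega) (by grind) (by grind) (by grind) (by grind) (by grind)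
    clear H HH
    simp only [T3, Finset.insert_comm] at *
    omega
  rcases lt_or_gt_of_ne haq with c2 | c2
  · have g := gr (F := F) p a q r K (HH _ _ _ (by omega) (by omega) (by omega) (by omega) hp haK hq)
      (HH _ _ _ (by omega) (by omega) (by omega) (by omega) hp haK hr)
      (HH _ _ _ (by omega) (by omega) (by omega) (by omega) haK hq hr)
    have e1 := H a q r (insert p K) (by omega) (by omega) (by omega) (by omega) (by grind) (by grind) (by grind) (by grind) (by grind)
    have e2 := H p a r (insert q K) (by omega) (by omega) (by omega) (by omega) (by grind) (by grind) (by grind) (by grind) (by grind)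
    clear H HH
    simp only [T3, Finset.insert_comm] at *
    omega
  rcases lt_or_gt_of_ne har with c3 | c3
  · have g := gr (F := F) p q a r K (HH _ _ _ (by omega) (by omega) (by omega) (by omega) hp hq haK)
      (HH _ _ _ (by omega) (by omega) (by omega) (by omega) hp hq hr)
      (HH _ _ _ (by omega) (by omega) (by omega) (by omega) hq haK hr)
    have e1 := H p q a (insert r K) (by omega) (by omega) (by omega) (by omega) (by grind) (by grind) (by grind) (by grind) (by grind)
    have e2 := H p a r (insert q K) (by omega) (by omega) (by omega) (by omega) (by grind) (by grind) (by grind) (by grind) (by grind)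
    clear H HH
    simp only [T3, Finset.insert_comm] at *
    omega
  · have g := gr (F := F) p q r a K (HH _ _ _ (by omega) (by omega) (by omega) (by omega) hp hq hr)
      (HH _ _ _ (by omega) (by omega) (by omega) (by omega) hp hq haK)
      (HH _ _ _ (by omega) (by omega) (by omega) (by omega) hq hr haK)
    have e1 := H p q a (insert r K) (by omega) (by omega) (by omega) (by omega) (by grind) (by grind) (by grind) (by grind) (by grind)
    have e2 := H p r a (insert q K) (by omega) (by omega) (by omega) (by omega) (by grind) (by grind) (by grind) (by grind) (by grind)
    clear H HH
    simp only [T3, Finset.insert_comm] at *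
    omega

theorem full_T (h : HT m a b F) (ha : 1 ≤ a) (hb : b = a + 1) (hbm : b ≤ m) : FT m F := by
  intro x y z K h1 h2 h3 h4 hK hx hy hz
  by_cases haK : a ∉ K
  · exact r2_all h ha hb hbm x y z K h1 h2 h3 h4 hK hx hy hz haK
  push Not at haK
  by_cases hbK : b ∈ K
  · exact h x y z K h1 h2 h3 h4 hK hx hy hz (by tauto)
  have hKe : K = insert a (K.erase a) := (Finset.insert_erase haK).symm
  have hs : K.erase a ⊆ Finset.Icc 1 m := (Finset.erase_subset _ _).trans hK
  have n1 : a ∉ K.erase a := by simp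
  have n2 : b ∉ K.erase a := by grind
  have n3 : x ∉ K.erase a := by grind
  have n4 : y ∉ K.erase a := by grind
  have n5 : z ∉ K.erase a := by grind
  have m1 : a ≠ x := by grind
  have m2 : a ≠ y := by grind
  have m3 : a ≠ z := by grind
  rw [hKe]
  by_cases c1 : b = x
  · subst c1
    exact r3_1 h ha hb y z _ (by omega) h3 h4 hs n1 n2 n4 n5
  by_cases c2 : b = y
  · subst c2
    exact r3_2 h hb x z _ (by omega) (by omega) (by omega) h4 hs n1 n2 n3 n5
  by_cases c3 : b = z
  · subst c3
    exact r3_3 h hb x y _ (by omega) (by omega) (by omega) h4 hs n1 n2 n3 n4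
  exact r1_all h ha hb hbm x y z _ h1 h2 h3 h4 hs n3 n4 n5 n1 m1 m2 m3

end core

def P2 (F : Finset ℕ → ℤ) (K : Finset ℕ) (x y : ℕ) : Prop :=
  F (insert x K) + F (insert y K) ≤ F (insert x (insert y K)) + F K

theorem P2.symm {F : Finset ℕ → ℤ} {K : Finset ℕ} {x y : ℕ} (h : P2 F K x y) : P2 F K y x := by
  unfold P2 at *
  rw [Finset.insert_comm]
  omega

def FP (m : ℕ) (F : Finset ℕ → ℤ) : Prop :=
  ∀ x y : ℕ, ∀ K : Finset ℕ, 1 ≤ x → x ≤ m → 1 ≤ y → y ≤ m → x ≠ y → K ⊆ Finset.Icc 1 m →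
    x ∉ K → y ∉ K → P2 F K x y

def HP (m a b : ℕ) (F : Finset ℕ → ℤ) : Prop :=
  ∀ x y : ℕ, ∀ K : Finset ℕ, 1 ≤ x → x ≤ m → 1 ≤ y → y ≤ m → x ≠ y → K ⊆ Finset.Icc 1 m →
    x ∉ K → y ∉ K → ((a ∉ K ∧ a ≠ x ∧ a ≠ y) ∨ b ∈ K) → P2 F K x y

section core2
variable {m a b : ℕ} {F : Finset ℕ → ℤ}

theorem c_all (h : FT m F) (hp : HP m a b F) (ha : 1 ≤ a) (hb : b = a + 1) (hbm : b ≤ m)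
    (h0 : P2 F (Finset.Icc 1 (a - 1)) a b) (K : Finset ℕ) (hK : K ⊆ Finset.Icc 1 m)
    (haK : a ∉ K) (hbK : b ∉ K) : P2 F K a b := by
  by_cases c1 : ∃ k ∈ K, b < k
  · obtain ⟨k, hk, hbk⟩ := c1
    have hkm := Finset.mem_Icc.1 (hK hk)
    obtain ⟨L, hkL, rfl⟩ : ∃ L, k ∉ L ∧ K = insert k L :=
      ⟨K.erase k, by simp, (Finset.insert_erase hk).symm⟩
    have e1 := h a b k L (by omega) (by omega) (by omega) (by omega) (by grind) (by grind) (by grind) (by grind)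
    have e2 := hp a k (insert b L) (by omega) (by omega) (by omega) (by omega) (by grind) (by grind) (by grind) (by grind) (by grind)
    simp only [T3, P2, Finset.insert_comm] at *
    omega
  by_cases c2 : ∃ k, k ∉ K ∧ 1 ≤ k ∧ k < a
  · obtain ⟨k, hk, hk1, hka⟩ := c2
    have e1 := h k a b K (by omega) (by omega) (by omega) (by omega) (by grind) (by grind) (by grind) (by grind)
    have e2 := hp k b K (by omega) (by omega) (by omega) (by omega) (by grind) (by grind) (by grind) (by grind) (by grind)
    simp only [T3, P2, Finset.insert_comm] at *
    omega
  have : K = Finset.Icc 1 (a - 1) := by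
    push Not at c1 c2
    ext t
    rw [Finset.mem_Icc]
    constructor
    · intro ht
      have h1 := Finset.mem_Icc.1 (hK ht)
      have h2 := c1 t ht
      have h3 : t ≠ a := by grind
      have h4 : t ≠ b := by grind
      omega
    · intro ht
      by_contra h1
      have := c2 t h1 ht.1
      omega
  rw [this]
  exact h0

theorem p_aq (h : FT m F) (hp : HP m a b F) (ha : 1 ≤ a) (hb : b = a + 1) (hbm : b ≤ m)
    (hc : ∀ K, K ⊆ Finset.Icc 1 m → a ∉ K → b ∉ K → P2 F K a b)
    (q : ℕ) (K : Finset ℕ) (h1 : 1 ≤ q) (h2 : q ≤ m) (hK : K ⊆ Finset.Icc 1 m)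
    (haK : a ∉ K) (hqa : q ≠ a) (hq : q ∉ K) : P2 F K a q := by
  by_cases hbK : b ∈ K
  · exact hp a q K (by omega) (by omega) h1 h2 hqa.symm hK haK hq (Or.inr hbK)
  by_cases hqb : q = b
  · rw [hqb]; exact hc K hK haK hbK
  have e0 := hc K hK haK hbK
  have e1 := hp b q K (by omega) (by omega) (by omega) (by omega) (by omega) (by grind) (by grind) (by grind) (by grind)
  clear hc
  rcases lt_or_gt_of_ne hqa with c | c
  · have e2 := h q a b K (by omega) (by omega) (by omega) (by omega) (by grind) (by grind) (by grind) (by grind)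
    simp only [T3, P2, Finset.insert_comm] at *
    omega
  · have e2 := h a b q K (by omega) (by omega) (by omega) (by omega) (by grind) (by grind) (by grind) (by grind)
    simp only [T3, P2, Finset.insert_comm] at *
    omega

theorem p_bq (h : FT m F) (hp : HP m a b F) (ha : 1 ≤ a) (hb : b = a + 1) (hbm : b ≤ m)
    (hc : ∀ K, K ⊆ Finset.Icc 1 m → a ∉ K → b ∉ K → P2 F K a b)
    (q : ℕ) (K : Finset ℕ) (h1 : 1 ≤ q) (h2 : q ≤ m) (hK : K ⊆ Finset.Icc 1 m)
    (haK : a ∉ K) (hbK : b ∉ K) (hqa : q ≠ a) (hqb : q ≠ b) (hq : q ∉ K) :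
    P2 F (insert a K) b q := by
  have e0 := hc (insert q K) (by grind) (by grind) (by grind)
  have e1 := hp a q (insert b K) (by omega) (by omega) (by omega) (by omega) (by omega) (by grind) (by grind) (by grind) (by grind)
  clear hc
  rcases lt_or_gt_of_ne hqa with c | c
  · have e2 := h q a b K (by omega) (by omega) (by omega) (by omega) (by grind) (by grind) (by grind) (by grind)
    simp only [T3, P2, Finset.insert_comm] at *
    omega
  · have e2 := h a b q K (by omega) (by omega) (by omega) (by omega) (by grind) (by grind) (by grind) (by grind)
    simp only [T3, P2, Finset.insert_comm] at *
    omega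

theorem p_qr (h : FT m F) (ha : 1 ≤ a) (ham : a ≤ m)
    (hc : ∀ q K, 1 ≤ q → q ≤ m → K ⊆ Finset.Icc 1 m → a ∉ K → q ≠ a → q ∉ K → P2 F K a q)
    (q r : ℕ) (K : Finset ℕ) (h1 : 1 ≤ q) (hqr : q < r) (h2 : r ≤ m) (hK : K ⊆ Finset.Icc 1 m)
    (haK : a ∉ K) (hqa : q ≠ a) (hra : r ≠ a) (hq : q ∉ K) (hr : r ∉ K) :
    P2 F (insert a K) q r := by
  have e0 := hc q (insert r K) (by omega) (by omega) (by grind) (by grind) (by grind) (by grind)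
  have e1 := hc r (insert q K) (by omega) (by omega) (by grind) (by grind) (by grind) (by grind)
  clear hc
  rcases lt_or_gt_of_ne hqa with c | c
  · rcases lt_or_gt_of_ne hra with c' | c'
    · have e2 := h q r a K (by omega) (by omega) (by omega) (by omega) (by grind) (by grind) (by grind) (by grind)
      simp only [T3, P2, Finset.insert_comm] at *
      omega
    · have e2 := h q a r K (by omega) (by omega) (by omega) (by omega) (by grind) (by grind) (by grind) (by grind)
      simp only [T3, P2, Finset.insert_comm] at *
      omega
  · have e2 := h a q r K (by omega) (by omega) (by omega) (by omega) (by grind) (by grind) (by grind) (by grind)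
    simp only [T3, P2, Finset.insert_comm] at *
    omega

theorem full_P (h : FT m F) (hp : HP m a b F) (ha : 1 ≤ a) (hb : b = a + 1) (hbm : b ≤ m)
    (h0 : P2 F (Finset.Icc 1 (a - 1)) a b) : FP m F := by
  have hc := c_all h hp ha hb hbm h0
  have hq := p_aq h hp ha hb hbm hc
  intro x y K h1 h2 h3 h4 hxy hK hx hy
  by_cases haK : a ∉ K
  · by_cases c1 : x = a
    · subst c1; exact hq y K h3 h4 hK haK hxy.symm hy
    by_cases c2 : y = a
    · subst c2; exact (hq x K h1 h2 hK haK hxy hx).symm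
    exact hp x y K h1 h2 h3 h4 hxy hK hx hy (Or.inl ⟨haK, Ne.symm c1, Ne.symm c2⟩)
  push Not at haK
  by_cases hbK : b ∈ K
  · exact hp x y K h1 h2 h3 h4 hxy hK hx hy (Or.inr hbK)
  have hKe : K = insert a (K.erase a) := (Finset.insert_erase haK).symm
  have hs : K.erase a ⊆ Finset.Icc 1 m := (Finset.erase_subset _ _).trans hK
  have n1 : a ∉ K.erase a := by simp
  have n2 : b ∉ K.erase a := by grind
  have n3 : x ∉ K.erase a := by grind
  have n4 : y ∉ K.erase a := by grind
  have m1 : x ≠ a := by grind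
  have m2 : y ≠ a := by grind
  rw [hKe]
  by_cases c1 : x = b
  · subst c1; exact p_bq h hp ha hb hbm hc y _ h3 h4 hs n1 n2 m2 hxy.symm n4
  by_cases c2 : y = b
  · subst c2; exact (p_bq h hp ha hb hbm hc x _ h1 h2 hs n1 n2 m1 hxy n3).symm
  rcases lt_or_gt_of_ne hxy with c | c
  · exact p_qr h ha (by omega) hq x y _ h1 c h4 hs n1 m1 m2 n3 n4
  · exact (p_qr h ha (by omega) hq y x _ h3 c h2 hs n1 m2 m1 n4 n3).symm

end core2

theorem exA (B : Finset ℕ → ℕ → ℤ) (x : ℤ) (X : Finset ℕ)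
    (hB : ∀ D ⊆ X, ∀ k ∈ X, ∀ l ∈ X, k ≠ l → k ∉ D → l ∉ D →
      min (B D k) (B (insert k D) l) = min (B D l) (B (insert l D) k)) :
    ∃ A : Finset ℕ → ℤ, A ∅ = x ∧
      ∀ D ⊆ X, ∀ k ∈ X, k ∉ D → A (insert k D) = min (A D) (B D k) := by
  induction X using Finset.induction_on with
  | empty => exact ⟨fun _ => x, rfl, by simp⟩
  | insert e X he ih =>
    obtain ⟨A, hA0, hA⟩ := ih (fun D hD k hk l hl =>
      hB D (hD.trans (Finset.subset_insert _ _)) k (Finset.mem_insert_of_mem hk) l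
        (Finset.mem_insert_of_mem hl))
    refine ⟨fun D => if e ∈ D then min (A (D.erase e)) (B (D.erase e) e) else A D, ?_, ?_⟩
    · simpa using hA0
    · intro D hD k hk hkD
      by_cases hke : k = e
      · subst hke
        simp [hkD]
      · have hkX : k ∈ X := by grind
        by_cases heD : e ∈ D
        · have h1 : (insert k D).erase e = insert k (D.erase e) := by grind
          have h2 : insert e (D.erase e) = D := Finset.insert_erase heD
          have h3 := hA (D.erase e) (by grind) k hkX (by grind)
          have h4 := hB (D.erase e) (by grind) k hk e (by grind) hke (by grind) (by grind)
          rw [h2] at h4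
          simp only [Finset.mem_insert, heD, or_true, if_true]
          rw [h1, h3]
          omega
        · have h5 : e ∉ insert k D := by grind
          simp only [heD, h5, if_false]
          exact hA D (by grind) k hkX hkD

theorem sd_gt {D L0 : Finset ℕ} {k : ℕ} (hk : k ∉ D) (h0 : k ∉ L0) :
    symmDiff (insert k D) L0 = insert k (symmDiff D L0) ∧ k ∉ symmDiff D L0 := by
  constructor
  · ext t; simp only [Finset.mem_symmDiff, Finset.mem_insert]; grind
  · simp only [Finset.mem_symmDiff]; grind

theorem sd_lt {D L0 : Finset ℕ} {k : ℕ} (hk : k ∉ D) (h0 : k ∈ L0) :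
    symmDiff D L0 = insert k (symmDiff (insert k D) L0) ∧ k ∉ symmDiff (insert k D) L0 := by
  constructor
  · ext t; simp only [Finset.mem_symmDiff, Finset.mem_insert]; grind
  · simp only [Finset.mem_symmDiff, Finset.mem_insert]; grind

def Bt (M : Finset ℕ → ℤ) (a b : ℕ) (L : Finset ℕ) (k : ℕ) : ℤ :=
  M (insert a (insert b L)) + M (insert k L) - M (insert k (insert b L)) - M (insert b L)

section core3
variable {m a b : ℕ} {M : Finset ℕ → ℤ}

theorem comp_aux (h : FT m M) (ha : 1 ≤ a) (hb : b = a + 1) (hbm : b ≤ m)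
    (D : Finset ℕ) (hD : D ⊆ ((Finset.Icc 1 m).erase a).erase b)
    (k l : ℕ) (hk : k ∈ ((Finset.Icc 1 m).erase a).erase b)
    (hl : l ∈ ((Finset.Icc 1 m).erase a).erase b) (hkl : k < l) (hkD : k ∉ D) (hlD : l ∉ D) :
    min (Bt M a b ((symmDiff D (Finset.Icc 1 (a - 1))).erase k) k)
      (Bt M a b ((symmDiff (insert k D) (Finset.Icc 1 (a - 1))).erase l) l) =
    min (Bt M a b ((symmDiff D (Finset.Icc 1 (a - 1))).erase l) l)
      (Bt M a b ((symmDiff (insert l D) (Finset.Icc 1 (a - 1))).erase k) k) := by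
  simp only [Finset.mem_erase, Finset.mem_Icc] at hk hl
  obtain ⟨L, hL⟩ : ∃ L, L = ((symmDiff D (Finset.Icc 1 (a - 1))).erase k).erase l := ⟨_, rfl⟩
  have hmem : ∀ t, t ∈ L ↔ (t ≠ l ∧ t ≠ k ∧ ((t ∈ D ∧ ¬ (1 ≤ t ∧ t ≤ a - 1)) ∨
      ((1 ≤ t ∧ t ≤ a - 1) ∧ t ∉ D))) := by
    intro t; rw [hL]; simp only [Finset.mem_erase, Finset.mem_symmDiff, Finset.mem_Icc]
  have hD' : ∀ t ∈ D, t ≠ b ∧ t ≠ a ∧ 1 ≤ t ∧ t ≤ m := by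
    intro t ht
    simpa only [Finset.mem_erase, Finset.mem_Icc] using hD ht
  have hLs : L ⊆ Finset.Icc 1 m := by
    intro t ht
    rw [hmem] at ht
    rw [Finset.mem_Icc]
    rcases ht.2.2 with h1 | h1
    · exact (hD' t h1.1).2.2
    · omega
  have haL : a ∉ L := by
    rw [hmem]; intro h1
    rcases h1.2.2 with h1 | h1
    · exact (hD' a h1.1).2.1 rfl
    · omega
  have hbL : b ∉ L := by
    rw [hmem]; intro h1
    rcases h1.2.2 with h1 | h1
    · exact (hD' b h1.1).1 rfl
    · omega
  have hkL : k ∉ L := by rw [hmem]; tauto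
  have hlL : l ∉ L := by rw [hmem]; tauto
  clear hL hD
  by_cases c1 : l < a
  · have s1 : (symmDiff D (Finset.Icc 1 (a - 1))).erase k = insert l L := by
      ext t; simp only [Finset.mem_erase, Finset.mem_symmDiff, Finset.mem_Icc, Finset.mem_insert, hmem]; grind
    have s2 : (symmDiff (insert k D) (Finset.Icc 1 (a - 1))).erase l = L := by
      ext t; simp only [Finset.mem_erase, Finset.mem_symmDiff, Finset.mem_Icc, Finset.mem_insert, hmem]; grind
    have s3 : (symmDiff D (Finset.Icc 1 (a - 1))).erase l = insert k L := by
      ext t; simp only [Finset.mem_erase, Finset.mem_symmDiff, Finset.mem_Icc, Finset.mem_insert, hmem]; grind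
    have s4 : (symmDiff (insert l D) (Finset.Icc 1 (a - 1))).erase k = L := by
      ext t; simp only [Finset.mem_erase, Finset.mem_symmDiff, Finset.mem_Icc, Finset.mem_insert, hmem]; grind
    rw [s1, s2, s3, s4]
    have e1 := h k l b L (by omega) (by omega) (by omega) (by omega) hLs hkL hlL hbL
    have e2 := h k l a (insert b L) (by omega) (by omega) (by omega) (by omega) (by grind) (by grind) (by grind) (by grind)
    clear s1 s2 s3 s4 hmem hD'
    simp only [T3, Bt, Finset.insert_comm] at *
    omega
  by_cases c2 : k < a
  · have s1 : (symmDiff D (Finset.Icc 1 (a - 1))).erase k = L := by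
      ext t; simp only [Finset.mem_erase, Finset.mem_symmDiff, Finset.mem_Icc, hmem]; grind
    have s2 : (symmDiff (insert k D) (Finset.Icc 1 (a - 1))).erase l = L := by
      ext t; simp only [Finset.mem_erase, Finset.mem_symmDiff, Finset.mem_Icc, Finset.mem_insert, hmem]; grind
    have s3 : (symmDiff D (Finset.Icc 1 (a - 1))).erase l = insert k L := by
      ext t; simp only [Finset.mem_erase, Finset.mem_symmDiff, Finset.mem_Icc, Finset.mem_insert, hmem]; grind
    have s4 : (symmDiff (insert l D) (Finset.Icc 1 (a - 1))).erase k = insert l L := by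
      ext t; simp only [Finset.mem_erase, Finset.mem_symmDiff, Finset.mem_Icc, Finset.mem_insert, hmem]; grind
    rw [s1, s2, s3, s4]
    have e1 := h k b l L (by omega) (by omega) (by omega) (by omega) hLs hkL hbL hlL
    have e2 := h k a l (insert b L) (by omega) (by omega) (by omega) (by omega) (by grind) (by grind) (by grind) (by grind)
    clear s1 s2 s3 s4 hmem hD'
    simp only [T3, Bt, Finset.insert_comm] at *
    omega
  · have s1 : (symmDiff D (Finset.Icc 1 (a - 1))).erase k = L := by
      ext t; simp only [Finset.mem_erase, Finset.mem_symmDiff, Finset.mem_Icc, hmem]; grind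
    have s2 : (symmDiff (insert k D) (Finset.Icc 1 (a - 1))).erase l = insert k L := by
      ext t; simp only [Finset.mem_erase, Finset.mem_symmDiff, Finset.mem_Icc, Finset.mem_insert, hmem]; grind
    have s3 : (symmDiff D (Finset.Icc 1 (a - 1))).erase l = L := by
      ext t; simp only [Finset.mem_erase, Finset.mem_symmDiff, Finset.mem_Icc, hmem]; grind
    have s4 : (symmDiff (insert l D) (Finset.Icc 1 (a - 1))).erase k = insert l L := by
      ext t; simp only [Finset.mem_erase, Finset.mem_symmDiff, Finset.mem_Icc, Finset.mem_insert, hmem]; grind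
    rw [s1, s2, s3, s4]
    have e1 := h b k l L (by omega) (by omega) (by omega) (by omega) hLs hbL hkL hlL
    have e2 := h a k l (insert b L) (by omega) (by omega) (by omega) (by omega) (by grind) (by grind) (by grind) (by grind)
    clear s1 s2 s3 s4 hmem hD'
    simp only [T3, Bt, Finset.insert_comm] at *
    omega

theorem exAL (h : FT m M) (ha : 1 ≤ a) (hb : b = a + 1) (hbm : b ≤ m) (x : ℤ) :
    ∃ A : Finset ℕ → ℤ, A (Finset.Icc 1 (a - 1)) = x ∧
      ∀ L, L ⊆ Finset.Icc 1 m → a ∉ L → b ∉ L → ∀ k, k ∉ L →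
        (b < k → k ≤ m → A (insert k L) = min (A L) (Bt M a b L k)) ∧
        (1 ≤ k → k < a → A L = min (A (insert k L)) (Bt M a b L k)) := by
  obtain ⟨A, hA0, hA⟩ := exA
    (fun D k => Bt M a b ((symmDiff D (Finset.Icc 1 (a - 1))).erase k) k) x
    (((Finset.Icc 1 m).erase a).erase b) (by
      intro D hD k hk l hl hkl hkD hlD
      rcases lt_or_gt_of_ne hkl with c | c
      · exact comp_aux h ha hb hbm D hD k l hk hl c hkD hlD
      · exact (comp_aux h ha hb hbm D hD l k hl hk c hlD hkD).symm)
  refine ⟨fun L => A (symmDiff L (Finset.Icc 1 (a - 1))), by simpa using hA0, ?_⟩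
  intro L hL haL hbL k hkL
  have hsub : ∀ K : Finset ℕ, K ⊆ Finset.Icc 1 m → a ∉ K → b ∉ K →
      symmDiff K (Finset.Icc 1 (a - 1)) ⊆ ((Finset.Icc 1 m).erase a).erase b := by
    intro K hK haK hbK t ht
    simp only [Finset.mem_erase, Finset.mem_symmDiff, Finset.mem_Icc] at ht ⊢
    rcases ht with h1 | h1
    · have := Finset.mem_Icc.1 (hK h1.1)
      refine ⟨?_, ?_, this⟩
      · rintro rfl; exact hbK h1.1
      · rintro rfl; exact haK h1.1
    · omega
  constructor
  · intro hbk hkm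
    have hk0 : k ∉ Finset.Icc 1 (a - 1) := by rw [Finset.mem_Icc]; omega
    obtain ⟨u1, u2⟩ := sd_gt hkL hk0
    have := hA _ (hsub L hL haL hbL) k
      (by simp only [Finset.mem_erase, Finset.mem_Icc]; omega) u2
    simp only [symmDiff_symmDiff_cancel_right, Finset.erase_eq_of_notMem hkL] at this
    simp only [u1, this]
  · intro hk1 hka
    have hk0 : k ∈ Finset.Icc 1 (a - 1) := by rw [Finset.mem_Icc]; omega
    obtain ⟨u1, u2⟩ := sd_lt hkL hk0
    have := hA _ (hsub (insert k L) (by grind) (by grind) (by grind)) k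
      (by simp only [Finset.mem_erase, Finset.mem_Icc]; omega) u2
    simp only [symmDiff_symmDiff_cancel_right, Finset.erase_insert hkL] at this
    simp only [u1, this]

theorem exist_N (h : FT m M) (hP : FP m M) (ha : 1 ≤ a) (hb : b = a + 1) (hbm : b ≤ m) (x : ℤ)
    (hx : x + M (insert b (Finset.Icc 1 (a - 1))) ≤
      M (insert a (insert b (Finset.Icc 1 (a - 1)))) + M (Finset.Icc 1 (a - 1)) -
      M (insert b (Finset.Icc 1 (a - 1)))) :
    ∃ N : Finset ℕ → ℤ, FT m N ∧ FP m N ∧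
      N (insert a (Finset.Icc 1 (a - 1))) = x + M (insert b (Finset.Icc 1 (a - 1))) ∧
      ∀ K, ¬ (a ∈ K ∧ b ∉ K) → N K = M K := by
  obtain ⟨A, hA0, hA⟩ := exAL h ha hb hbm x
  obtain ⟨N, hN⟩ : ∃ N : Finset ℕ → ℤ, N = fun K => if a ∈ K ∧ b ∉ K then
    A (K.erase a) + M (insert b (K.erase a)) else M K := ⟨_, rfl⟩
  have ho : ∀ K, ¬ (a ∈ K ∧ b ∉ K) → N K = M K := by
    intro K hK; rw [hN]; simp only [hK, if_false]
  have hi : ∀ L, a ∉ L → b ∉ L → N (insert a L) = A L + M (insert b L) := by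
    intro L h1 h2
    have : a ∈ insert a L ∧ b ∉ insert a L := by
      refine ⟨by simp, ?_⟩
      rw [Finset.mem_insert]; push Not; exact ⟨by omega, h2⟩
    rw [hN]; simp only [this, not_false_eq_true, and_self, if_true, Finset.erase_insert h1]
  have n1 : a ∉ Finset.Icc 1 (a - 1) := by rw [Finset.mem_Icc]; omega
  have n2 : b ∉ Finset.Icc 1 (a - 1) := by rw [Finset.mem_Icc]; omega
  have hHT : HT m a b N := by
    intro x y z K h1 h2 h3 h4 hK hx hy hz hc
    have e := h x y z K h1 h2 h3 h4 hK hx hy hz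
    by_cases c : (a ∉ K ∧ a ≠ x ∧ a ≠ y ∧ a ≠ z) ∨ b ∈ K
    · unfold T3 at *
      rw [ho _ (by grind), ho _ (by grind), ho _ (by grind), ho _ (by grind), ho _ (by grind),
        ho _ (by grind)]
      exact e
    · have hbK : b ∉ K := by tauto
      have hc' : (a = x ∨ a = y ∨ a = z) ∧ (b = x ∨ b = y ∨ b = z) := by tauto
      have haK : a ∉ K := by grind
      have : (a = x ∧ b = y) ∨ (a = y ∧ b = z) := by omega
      clear c hc hc'
      rcases this with ⟨rfl, rfl⟩ | ⟨rfl, rfl⟩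
      · have e1 := (hA K hK haK hbK z hz).1 h3 h4
        have e2 := hi K haK hbK
        have e3 := hi (insert z K) (by grind) (by grind)
        have e4 := ho (insert b K) (by grind)
        have e5 := ho (insert a (insert b K)) (by grind)
        have e6 := ho (insert z K) (by grind)
        have e7 := ho (insert b (insert z K)) (by grind)
        clear hA hA0 hN ho hi e
        simp only [T3, Bt, Finset.insert_comm] at *
        omega
      · have e1 := (hA K hK haK hbK x hx).2 h1 h2
        have e2 := hi K haK hbK
        have e3 := hi (insert x K) (by grind) (by grind)
        have e4 := ho (insert b K) (by grind)
        have e5 := ho (insert a (insert b K)) (by grind)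
        have e6 := ho (insert x K) (by grind)
        have e7 := ho (insert b (insert x K)) (by grind)
        clear hA hA0 hN ho hi e
        simp only [T3, Bt, Finset.insert_comm] at *
        omega
  have hHP : HP m a b N := by
    intro x y K h1 h2 h3 h4 h5 hK hx hy hc
    have e := hP x y K h1 h2 h3 h4 h5 hK hx hy
    unfold P2 at *
    rw [ho _ (by grind), ho _ (by grind), ho _ (by grind), ho _ (by grind)]
    exact e
  have hF := full_T hHT ha hb hbm
  have e2 := hi _ n1 n2
  rw [hA0] at e2
  refine ⟨N, hF, full_P hF hHP ha hb hbm ?_, e2, ho⟩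
  unfold P2
  rw [e2, ho (insert b _) (by grind), ho (insert a (insert b _)) (by grind), ho (Finset.Icc _ _) (by grind)]
  omega

theorem uniq_N {M₁ M₂ : Finset ℕ → ℤ} (h₁ : FT m M₁) (h₂ : FT m M₂) (hb : b = a + 1)
    (hbm : b ≤ m) (ha : 1 ≤ a)
    (h0 : M₁ (insert a (Finset.Icc 1 (a - 1))) = M₂ (insert a (Finset.Icc 1 (a - 1))))
    (ho : ∀ K, K ⊆ Finset.Icc 1 m → ¬ (a ∈ K ∧ b ∉ K) → M₁ K = M₂ K) :
    ∀ K, K ⊆ Finset.Icc 1 m → M₁ K = M₂ K := by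
  have key : ∀ D : Finset ℕ, D ⊆ ((Finset.Icc 1 m).erase a).erase b →
      M₁ (insert a (symmDiff D (Finset.Icc 1 (a - 1)))) =
      M₂ (insert a (symmDiff D (Finset.Icc 1 (a - 1)))) := by
    intro D
    have hsub : ∀ D : Finset ℕ, D ⊆ ((Finset.Icc 1 m).erase a).erase b →
      symmDiff D (Finset.Icc 1 (a - 1)) ⊆ Finset.Icc 1 m ∧ a ∉ symmDiff D (Finset.Icc 1 (a - 1)) ∧
        b ∉ symmDiff D (Finset.Icc 1 (a - 1)) := by
      intro D hD
      refine ⟨?_, ?_, ?_⟩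
      · intro t ht
        simp only [Finset.mem_symmDiff, Finset.mem_Icc] at ht ⊢
        rcases ht with h1 | h1
        · have := hD h1.1
          simp only [Finset.mem_erase, Finset.mem_Icc] at this
          omega
        · omega
      · simp only [Finset.mem_symmDiff, Finset.mem_Icc]
        rintro (h1 | h1)
        · have := hD h1.1
          simp at this
        · omega
      · simp only [Finset.mem_symmDiff, Finset.mem_Icc]
        rintro (h1 | h1)
        · have := hD h1.1
          simp at this
        · omega
    induction D using Finset.induction_on with
    | empty =>
      intro _
      rw [← Finset.bot_eq_empty, bot_symmDiff]
      exact h0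
    | insert k D hk ih =>
      intro hD
      have ih := ih ((Finset.subset_insert _ _).trans hD)
      obtain ⟨v1, v2, v3⟩ := hsub D ((Finset.subset_insert _ _).trans hD)
      obtain ⟨w1, w2, w3⟩ := hsub _ hD
      have hkX := hD (Finset.mem_insert_self k D)
      simp only [Finset.mem_erase, Finset.mem_Icc] at hkX
      by_cases c : k < a
      · obtain ⟨u1, u2⟩ := sd_lt hk (show k ∈ Finset.Icc 1 (a - 1) by rw [Finset.mem_Icc]; omega)
        rw [u1] at ih v1 v2 v3
        generalize symmDiff (insert k D) (Finset.Icc 1 (a - 1)) = L at *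
        have e1 := h₁ k a b L (by omega) (by omega) (by omega) hbm w1 u2 w2 w3
        have e2 := h₂ k a b L (by omega) (by omega) (by omega) hbm w1 u2 w2 w3
        have o1 := ho (insert b L) (by grind) (by grind)
        have o2 := ho (insert a (insert b L)) (by grind) (by grind)
        have o3 := ho (insert k L) (by grind) (by grind)
        have o4 := ho (insert k (insert b L)) (by grind) (by grind)
        clear ho hsub u1
        simp only [T3, Finset.insert_comm] at *
        omega
      · obtain ⟨u1, u2⟩ := sd_gt hk (show k ∉ Finset.Icc 1 (a - 1) by rw [Finset.mem_Icc]; omega)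
        rw [u1] at w1 w2 w3 ⊢
        generalize symmDiff D (Finset.Icc 1 (a - 1)) = L at *
        have e1 := h₁ a b k L (by omega) (by omega) (by omega) (by omega) v1 v2 v3 u2
        have e2 := h₂ a b k L (by omega) (by omega) (by omega) (by omega) v1 v2 v3 u2
        have o1 := ho (insert b L) (by grind) (by grind)
        have o2 := ho (insert a (insert b L)) (by grind) (by grind)
        have o3 := ho (insert k L) (by grind) (by grind)
        have o4 := ho (insert b (insert k L)) (by grind) (by grind)
        clear ho hsub u1
        simp only [T3, Finset.insert_comm] at *
        omega
  intro K hK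
  by_cases c : a ∈ K ∧ b ∉ K
  · have := key (symmDiff (K.erase a) (Finset.Icc 1 (a - 1))) (by
      intro t ht
      simp only [Finset.mem_erase, Finset.mem_symmDiff, Finset.mem_Icc] at ht ⊢
      rcases ht with h1 | h1
      · have := Finset.mem_Icc.1 (hK h1.1.2)
        refine ⟨?_, h1.1.1, this⟩
        rintro rfl; exact c.2 h1.1.2
      · omega)
    rw [symmDiff_symmDiff_cancel_right, Finset.insert_erase c.1] at this
    exact this
  · exact ho K hK c

end core3

/-- Kamnitzer: let `M` be a `w₀`-BZ datum, `i ∈ [1,n]`, and set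
`ε_i(M) = −(M_{[1,i]} + M_{[1,i+1]∖{i}} − M_{[1,i+1]} − M_{[1,i−1]})`; it is nonnegative.
(1) If `ε_i(M) > 0` there is a unique `w₀`-BZ datum `M'` (unique as a collection, i.e. on
Maya diagrams `K ⊆ [1,n+1]`) with `M'_{[1,i]} = M_{[1,i]} + 1` and `M'_K = M_K` for all
`K ∉ M_n^×(i) = {K : i ∈ K, i+1 ∉ K}`.  (2) There is a unique `w₀`-BZ datum `M''` with
`M''_{[1,i]} = M_{[1,i]} − 1` and `M''_K = M_K` for all `K ∉ M_n^×(i)`. -/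
theorem stmt7 (n : ℕ) (hn : 1 ≤ n) (M : Finset ℕ → ℤ) (hM : IsW0BZ n M)
    (i : ℕ) (hi1 : 1 ≤ i) (hi2 : i ≤ n) :
    0 ≤ -(M (Finset.Icc 1 i) + M ((Finset.Icc 1 (i + 1)).erase i) -
        M (Finset.Icc 1 (i + 1)) - M (Finset.Icc 1 (i - 1))) ∧
    (0 < -(M (Finset.Icc 1 i) + M ((Finset.Icc 1 (i + 1)).erase i) -
        M (Finset.Icc 1 (i + 1)) - M (Finset.Icc 1 (i - 1))) →
      ((∃ M' : Finset ℕ → ℤ, IsW0BZ n M' ∧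
          M' (Finset.Icc 1 i) = M (Finset.Icc 1 i) + 1 ∧
          ∀ K : Finset ℕ, K ⊆ Finset.Icc 1 (n + 1) → ¬(i ∈ K ∧ i + 1 ∉ K) → M' K = M K) ∧
        ∀ M₁ M₂ : Finset ℕ → ℤ,
          (IsW0BZ n M₁ ∧ M₁ (Finset.Icc 1 i) = M (Finset.Icc 1 i) + 1 ∧
            ∀ K : Finset ℕ, K ⊆ Finset.Icc 1 (n + 1) → ¬(i ∈ K ∧ i + 1 ∉ K) → M₁ K = M K) →
          (IsW0BZ n M₂ ∧ M₂ (Finset.Icc 1 i) = M (Finset.Icc 1 i) + 1 ∧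
            ∀ K : Finset ℕ, K ⊆ Finset.Icc 1 (n + 1) → ¬(i ∈ K ∧ i + 1 ∉ K) → M₂ K = M K) →
          ∀ K : Finset ℕ, K ⊆ Finset.Icc 1 (n + 1) → M₁ K = M₂ K)) ∧
    ((∃ M'' : Finset ℕ → ℤ, IsW0BZ n M'' ∧
        M'' (Finset.Icc 1 i) = M (Finset.Icc 1 i) - 1 ∧
        ∀ K : Finset ℕ, K ⊆ Finset.Icc 1 (n + 1) → ¬(i ∈ K ∧ i + 1 ∉ K) → M'' K = M K) ∧
      ∀ M₁ M₂ : Finset ℕ → ℤ,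
        (IsW0BZ n M₁ ∧ M₁ (Finset.Icc 1 i) = M (Finset.Icc 1 i) - 1 ∧
          ∀ K : Finset ℕ, K ⊆ Finset.Icc 1 (n + 1) → ¬(i ∈ K ∧ i + 1 ∉ K) → M₁ K = M K) →
        (IsW0BZ n M₂ ∧ M₂ (Finset.Icc 1 i) = M (Finset.Icc 1 i) - 1 ∧
          ∀ K : Finset ℕ, K ⊆ Finset.Icc 1 (n + 1) → ¬(i ∈ K ∧ i + 1 ∉ K) → M₂ K = M K) →
        ∀ K : Finset ℕ, K ⊆ Finset.Icc 1 (n + 1) → M₁ K = M₂ K) := by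
  obtain ⟨⟨hM0, hM1, hMP, hMT⟩, hMw⟩ := hM
  have hT : FT (n + 1) M := hMT
  have hP : FP (n + 1) M := hMP
  have s1 : Finset.Icc 1 i = insert i (Finset.Icc 1 (i - 1)) := by
    ext t; simp only [Finset.mem_insert, Finset.mem_Icc]; omega
  have s2 : (Finset.Icc 1 (i + 1)).erase i = insert (i + 1) (Finset.Icc 1 (i - 1)) := by
    ext t; simp only [Finset.mem_insert, Finset.mem_Icc, Finset.mem_erase]; omega
  have s3 : Finset.Icc 1 (i + 1) = insert i (insert (i + 1) (Finset.Icc 1 (i - 1))) := by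
    ext t; simp only [Finset.mem_insert, Finset.mem_Icc]; omega
  have hpos := hP i (i + 1) (Finset.Icc 1 (i - 1)) (by omega) (by omega) (by omega) (by omega)
    (by omega) (Finset.Icc_subset_Icc le_rfl (by omega)) (by rw [Finset.mem_Icc]; omega)
    (by rw [Finset.mem_Icc]; omega)
  unfold P2 at hpos
  rw [s2, s1, s3]
  have ex : ∀ d : ℤ, M (insert i (Finset.Icc 1 (i - 1))) + d +
      M (insert (i + 1) (Finset.Icc 1 (i - 1))) ≤
      M (insert i (insert (i + 1) (Finset.Icc 1 (i - 1)))) + M (Finset.Icc 1 (i - 1)) →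
      ∃ M' : Finset ℕ → ℤ, IsW0BZ n M' ∧
          M' (insert i (Finset.Icc 1 (i - 1))) = M (insert i (Finset.Icc 1 (i - 1))) + d ∧
          ∀ K : Finset ℕ, K ⊆ Finset.Icc 1 (n + 1) → ¬(i ∈ K ∧ i + 1 ∉ K) → M' K = M K := by
    intro d hd
    obtain ⟨N, hNT, hNP, hN0, hNo⟩ := exist_N hT hP hi1 (rfl : i + 1 = i + 1) (by omega)
      (M (insert i (Finset.Icc 1 (i - 1))) + d - M (insert (i + 1) (Finset.Icc 1 (i - 1))))
      (by omega)
    refine ⟨N, ⟨⟨?_, ?_, hNP, hNT⟩, ?_⟩, by omega, fun K _ hK => hNo K hK⟩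
    · rw [hNo _ (by simp), hM0]
    · rw [hNo _ (by simp only [Finset.mem_Icc]; omega), hM1]
    · intro j hj1 hj2
      rw [hNo _ (by simp only [Finset.mem_Icc]; omega), hMw j hj1 hj2]
  have un : ∀ d : ℤ, ∀ M₁ M₂ : Finset ℕ → ℤ,
          (IsW0BZ n M₁ ∧ M₁ (insert i (Finset.Icc 1 (i - 1))) = d ∧
            ∀ K : Finset ℕ, K ⊆ Finset.Icc 1 (n + 1) → ¬(i ∈ K ∧ i + 1 ∉ K) → M₁ K = M K) →
          (IsW0BZ n M₂ ∧ M₂ (insert i (Finset.Icc 1 (i - 1))) = d ∧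
            ∀ K : Finset ℕ, K ⊆ Finset.Icc 1 (n + 1) → ¬(i ∈ K ∧ i + 1 ∉ K) → M₂ K = M K) →
          ∀ K : Finset ℕ, K ⊆ Finset.Icc 1 (n + 1) → M₁ K = M₂ K := by
    rintro d M₁ M₂ ⟨⟨⟨_, _, _, t1⟩, _⟩, a1, o1⟩ ⟨⟨⟨_, _, _, t2⟩, _⟩, a2, o2⟩
    exact uniq_N (a := i) (b := i + 1) (m := n + 1) t1 t2 rfl (by omega) hi1 (a1.trans a2.symm)
      (fun K hK hc => (o1 K hK hc).trans (o2 K hK hc).symm)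
  refine ⟨by omega, fun hpos' => ⟨ex 1 (by omega), un _⟩, ⟨?_, un _⟩⟩
  have := ex (-1) (by omega)
  simpa only [← sub_eq_add_neg] using this
end

section
/- Let M = (M_K) be an e-BZ datum and i ∈ {1,…,n}, and set ε_i^*(M) = −(M_{[i+1,n+1]} + M_{{i}∪[i+2,n+1]} − M_{[i+2,n+1]} − M_{[i,n+1]}). Then: (1) if ε_i^*(M) > 0, there exists a unique e-BZ datum M' with M'_{[i+1,n+1]} = M_{[i+1,n+1]} + 1 and M'_K = M_K for all K ∈ M_n^× ∖ M_n^×(i)^*; (2) there exists a unique e-BZ datum M'' with M''_{[i+1,n+1]} = M_{[i+1,n+1]} − 1 and M''_K = M_K for all K ∈ M_n^× ∖ M_n^×(i)^*. -/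
set_option linter.unreachableTactic false
set_option linter.unusedTactic false
set_option linter.unusedVariables false
set_option linter.unusedSimpArgs false
def Rl (M : Finset ℕ → ℤ) (x y z : ℕ) (K : Finset ℕ) : Prop :=
  M (insert x (insert z K)) + M (insert y K) =
    min (M (insert x (insert y K)) + M (insert z K)) (M (insert y (insert z K)) + M (insert x K))

def Il (M : Finset ℕ → ℤ) (x y : ℕ) (K : Finset ℕ) : Prop :=
  M (insert x K) + M (insert y K) ≤ M (insert x (insert y K)) + M K

theorem cyc_p (M : Finset ℕ → ℤ) (p q r s : ℕ) (K : Finset ℕ)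
    (h0 : Rl M p q r K)
    (h1 : Rl M p q r (insert s K))
    (h2 : Rl M p q s K)
    (h3 : Rl M p q s (insert r K))
    (h4 : Rl M p r s K)
    (h5 : Rl M p r s (insert q K))
    (h6 : Rl M q r s K) :
    Rl M q r s (insert p K) := by
  simp only [Rl, Il, Finset.insert_comm] at *
  omega

theorem cyc_q (M : Finset ℕ → ℤ) (p q r s : ℕ) (K : Finset ℕ)
    (h0 : Rl M p q r K)
    (h1 : Rl M p q r (insert s K))
    (h2 : Rl M p q s K)
    (h3 : Rl M p q s (insert r K))
    (h4 : Rl M p r s K)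
    (h5 : Rl M q r s K)
    (h6 : Rl M q r s (insert p K)) :
    Rl M p r s (insert q K) := by
  simp only [Rl, Il, Finset.insert_comm] at *
  omega

theorem cyc_r (M : Finset ℕ → ℤ) (p q r s : ℕ) (K : Finset ℕ)
    (h0 : Rl M p q r K)
    (h1 : Rl M p q r (insert s K))
    (h2 : Rl M p q s K)
    (h3 : Rl M p r s K)
    (h4 : Rl M p r s (insert q K))
    (h5 : Rl M q r s K)
    (h6 : Rl M q r s (insert p K)) :
    Rl M p q s (insert r K) := by
  simp only [Rl, Il, Finset.insert_comm] at *
  omega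

theorem cyc_s (M : Finset ℕ → ℤ) (p q r s : ℕ) (K : Finset ℕ)
    (h0 : Rl M p q r K)
    (h1 : Rl M p q s K)
    (h2 : Rl M p q s (insert r K))
    (h3 : Rl M p r s K)
    (h4 : Rl M p r s (insert q K))
    (h5 : Rl M q r s K)
    (h6 : Rl M q r s (insert p K)) :
    Rl M p q r (insert s K) := by
  simp only [Rl, Il, Finset.insert_comm] at *
  omega

theorem sqA0 (M : Finset ℕ → ℤ) (p q i j : ℕ) (K : Finset ℕ)
    (h0 : Rl M p q i K)
    (h1 : Rl M p q j (insert i K))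
    (h2 : Rl M p i j K)
    (h3 : Rl M p i j (insert q K))
    (h4 : Rl M q i j K)
    (h5 : Rl M q i j (insert p K)) :
    Rl M p q i (insert j K) := by
  simp only [Rl, Il, Finset.insert_comm] at *
  omega

theorem sqA1 (M : Finset ℕ → ℤ) (p q i j : ℕ) (K : Finset ℕ)
    (h0 : Rl M p q i K)
    (h1 : Rl M p q j (insert i K))
    (h2 : Rl M p i j K)
    (h3 : Rl M p i j (insert q K))
    (h4 : Rl M q i j K)
    (h5 : Rl M q i j (insert p K)) :
    Rl M p q j K := by
  simp only [Rl, Il, Finset.insert_comm] at *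
  omega

theorem inA (M : Finset ℕ → ℤ) (p q i j : ℕ) (K : Finset ℕ)
    (h0 : Rl M p q i K)
    (h1 : Rl M p q j (insert i K))
    (h2 : Rl M p i j K)
    (h3 : Rl M p i j (insert q K))
    (h4 : Rl M q i j K)
    (h5 : Rl M q i j (insert p K))
    (h6 : Il M p q (insert i K))
    (h7 : Il M p j (insert i K))
    (h8 : Il M i j (insert p K))
    (h9 : Il M i j (insert q K)) :
    Il M p q (insert j K) := by
  simp only [Rl, Il, Finset.insert_comm] at *
  omega

theorem sqB0 (M : Finset ℕ → ℤ) (p i j q : ℕ) (K : Finset ℕ)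
    (h0 : Rl M p i q K)
    (h1 : Rl M p j q (insert i K))
    (h2 : Rl M p i j K)
    (h3 : Rl M p i j (insert q K))
    (h4 : Rl M i j q K)
    (h5 : Rl M i j q (insert p K)) :
    Rl M p i q (insert j K) := by
  simp only [Rl, Il, Finset.insert_comm] at *
  omega

theorem sqB1 (M : Finset ℕ → ℤ) (p i j q : ℕ) (K : Finset ℕ)
    (h0 : Rl M p i q K)
    (h1 : Rl M p j q (insert i K))
    (h2 : Rl M p i j K)
    (h3 : Rl M p i j (insert q K))
    (h4 : Rl M i j q K)
    (h5 : Rl M i j q (insert p K)) :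
    Rl M p j q K := by
  simp only [Rl, Il, Finset.insert_comm] at *
  omega

theorem inB (M : Finset ℕ → ℤ) (p i j q : ℕ) (K : Finset ℕ)
    (h0 : Rl M p i q K)
    (h1 : Rl M p j q (insert i K))
    (h2 : Rl M p i j K)
    (h3 : Rl M p i j (insert q K))
    (h4 : Rl M i j q K)
    (h5 : Rl M i j q (insert p K))
    (h6 : Il M p q (insert i K))
    (h7 : Il M i j (insert q K)) :
    Il M p q (insert j K) := by
  simp only [Rl, Il, Finset.insert_comm] at *
  omega

theorem sqC0 (M : Finset ℕ → ℤ) (i j p q : ℕ) (K : Finset ℕ)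
    (h0 : Rl M i p q K)
    (h1 : Rl M j p q (insert i K))
    (h2 : Rl M i j p K)
    (h3 : Rl M i j p (insert q K))
    (h4 : Rl M i j q K)
    (h5 : Rl M i j q (insert p K)) :
    Rl M i p q (insert j K) := by
  simp only [Rl, Il, Finset.insert_comm] at *
  omega

theorem sqC1 (M : Finset ℕ → ℤ) (i j p q : ℕ) (K : Finset ℕ)
    (h0 : Rl M i p q K)
    (h1 : Rl M j p q (insert i K))
    (h2 : Rl M i j p K)
    (h3 : Rl M i j p (insert q K))
    (h4 : Rl M i j q K)
    (h5 : Rl M i j q (insert p K)) :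
    Rl M j p q K := by
  simp only [Rl, Il, Finset.insert_comm] at *
  omega

theorem inC (M : Finset ℕ → ℤ) (i j p q : ℕ) (K : Finset ℕ)
    (h0 : Rl M i p q K)
    (h1 : Rl M j p q (insert i K))
    (h2 : Rl M i j p K)
    (h3 : Rl M i j p (insert q K))
    (h4 : Rl M i j q K)
    (h5 : Rl M i j q (insert p K))
    (h6 : Il M i j (insert p K))
    (h7 : Il M i j (insert q K))
    (h8 : Il M i p (insert q K))
    (h9 : Il M i q (insert p K))
    (h10 : Il M p q (insert i K)) :
    Il M p q (insert j K) := by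
  simp only [Rl, Il, Finset.insert_comm] at *
  omega

theorem TA (M : Finset ℕ → ℤ) (p i j : ℕ) (K : Finset ℕ)
    (h0 : Rl M p i j K)
    (h1 : Il M p i K)
    (h2 : Il M p j (insert i K))
    (h3 : Il M i j K) :
    Il M i j (insert p K) := by
  simp only [Rl, Il, Finset.insert_comm] at *
  omega

theorem JA0 (M : Finset ℕ → ℤ) (p i j : ℕ) (K : Finset ℕ)
    (h0 : Rl M p i j K)
    (h1 : Il M p i K)
    (h2 : Il M p j (insert i K))
    (h3 : Il M i j K) :
    Il M j p K := by
  simp only [Rl, Il, Finset.insert_comm] at *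
  omega

theorem JA1 (M : Finset ℕ → ℤ) (p i j : ℕ) (K : Finset ℕ)
    (h0 : Rl M p i j K)
    (h1 : Il M p i K)
    (h2 : Il M p j (insert i K))
    (h3 : Il M i j K) :
    Il M i p (insert j K) := by
  simp only [Rl, Il, Finset.insert_comm] at *
  omega

theorem TB (M : Finset ℕ → ℤ) (i j p : ℕ) (K : Finset ℕ)
    (h0 : Rl M i j p K)
    (h1 : Il M i p K)
    (h2 : Il M j p (insert i K))
    (h3 : Il M i j (insert p K)) :
    Il M i j K := by
  simp only [Rl, Il, Finset.insert_comm] at *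
  omega

theorem JB0 (M : Finset ℕ → ℤ) (i j p : ℕ) (K : Finset ℕ)
    (h0 : Rl M i j p K)
    (h1 : Il M i p K)
    (h2 : Il M j p (insert i K))
    (h3 : Il M i j (insert p K)) :
    Il M j p K := by
  simp only [Rl, Il, Finset.insert_comm] at *
  omega

theorem JB1 (M : Finset ℕ → ℤ) (i j p : ℕ) (K : Finset ℕ)
    (h0 : Rl M i j p K)
    (h1 : Il M i p K)
    (h2 : Il M j p (insert i K))
    (h3 : Il M i j (insert p K)) :
    Il M i p (insert j K) := by
  simp only [Rl, Il, Finset.insert_comm] at *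
  omega


theorem bz_ind (n i : ℕ) (P : Finset ℕ → Prop) (h0 : P (Finset.Icc (i + 2) (n + 1)))
    (hA : ∀ p L, 1 ≤ p → p < i → L ⊆ Finset.Icc 1 (n + 1) → p ∉ L → i ∉ L → i + 1 ∉ L →
      P L → P (insert p L))
    (hB : ∀ p L, i + 1 < p → p ≤ n + 1 → L ⊆ Finset.Icc 1 (n + 1) → p ∉ L → i ∉ L → i + 1 ∉ L →
      P (insert p L) → P L) :
    ∀ L, L ⊆ Finset.Icc 1 (n + 1) → i ∉ L → i + 1 ∉ L → P L := by
  intro L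
  induction hm : (symmDiff L (Finset.Icc (i + 2) (n + 1))).card using Nat.strong_induction_on
    generalizing L with
  | _ m ih =>
    intro hL hi hj
    by_cases hD : symmDiff L (Finset.Icc (i + 2) (n + 1)) = ∅
    · rw [← Finset.bot_eq_empty, symmDiff_eq_bot] at hD
      rw [hD]; exact h0
    · obtain ⟨p, hp⟩ := Finset.nonempty_iff_ne_empty.mpr hD
      have hp' := hp
      rw [Finset.mem_symmDiff] at hp'
      rcases hp' with ⟨h1, h2⟩ | ⟨h1, h2⟩
      · have h3 := hL h1
        rw [Finset.mem_Icc] at h2 h3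
        have hpi : p ≠ i := by rintro rfl; exact hi h1
        have hpj : p ≠ i + 1 := by rintro rfl; exact hj h1
        have := hA p (L.erase p) (by omega) (by omega) ((Finset.erase_subset _ _).trans hL)
          (by simp) (by simp [hi]) (by simp [hj])
        rw [Finset.insert_erase h1] at this
        apply this
        refine ih _ ?_ (L.erase p) rfl ((Finset.erase_subset _ _).trans hL)
          (by simp [hi]) (by simp [hj])
        rw [← hm]
        apply Finset.card_lt_card
        rw [Finset.ssubset_iff]
        refine ⟨p, ?_, ?_⟩
        · simp only [Finset.mem_symmDiff, Finset.mem_Icc, Finset.mem_erase]; grind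
        · intro x; simp only [Finset.mem_insert, Finset.mem_symmDiff, Finset.mem_Icc, Finset.mem_erase]; grind
      · rw [Finset.mem_Icc] at h1
        have hs : insert p L ⊆ Finset.Icc 1 (n + 1) := by
          apply Finset.insert_subset _ hL
          rw [Finset.mem_Icc]; omega
        refine hB p L (by omega) (by omega) hL h2 hi hj ?_
        refine ih _ ?_ (insert p L) rfl hs (by simp [hi]; omega) (by simp [hj]; omega)
        rw [← hm]
        apply Finset.card_lt_card
        rw [Finset.ssubset_iff]
        refine ⟨p, ?_, ?_⟩
        · simp only [Finset.mem_symmDiff, Finset.mem_Icc, Finset.mem_insert]; grind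
        · intro x; simp only [Finset.mem_insert, Finset.mem_symmDiff, Finset.mem_Icc]; grind

theorem exists_g (P : Finset ℕ) (w : Finset ℕ → ℕ → ℤ) (t : ℤ)
    (hw : ∀ D p q, D ⊆ P → p ∈ P → q ∈ P → p ≠ q → p ∉ D → q ∉ D →
      min (w D p) (w (insert p D) q) = min (w D q) (w (insert q D) p)) :
    ∃ g : Finset ℕ → ℤ, g ∅ = t ∧
      ∀ D p, D ⊆ P → p ∈ P → p ∉ D → g (insert p D) = min (g D) (w D p) := by
  induction P using Finset.induction_on with
  | empty => exact ⟨fun _ => t, rfl, by simp⟩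
  | insert m P hm ih =>
    obtain ⟨g, hg0, hg⟩ := ih (fun D p q hD hp hq => hw D p q (hD.trans (Finset.subset_insert _ _))
      (Finset.mem_insert_of_mem hp) (Finset.mem_insert_of_mem hq))
    refine ⟨fun D => if m ∈ D then min (g (D.erase m)) (w (D.erase m) m) else g D, by simp [hg0], ?_⟩
    intro D p hD hp hpD
    by_cases hpm : p = m
    · subst hpm
      simp [hpD, Finset.erase_insert hpD]
    · have hpP : p ∈ P := (Finset.mem_insert.mp hp).resolve_left hpm
      by_cases hmD : m ∈ D
      · have hE : D.erase m ⊆ P := by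
          intro x hx
          rw [Finset.mem_erase] at hx
          exact (Finset.mem_insert.mp (hD hx.2)).resolve_left hx.1
        have hpE : p ∉ D.erase m := fun h => hpD (Finset.mem_of_mem_erase h)
        have e1 : (insert p D).erase m = insert p (D.erase m) :=
          Finset.erase_insert_of_ne hpm
        have h1 := hg (D.erase m) p hE hpP hpE
        have h2 := hw (D.erase m) p m (hE.trans (Finset.subset_insert _ _)) hp
          (Finset.mem_insert_self _ _) hpm hpE (by simp)
        rw [Finset.insert_erase hmD] at h2
        simp only [Finset.mem_insert, hmD, or_true, if_true, e1]
        omega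
      · have hDP : D ⊆ P := by
          intro x hx
          refine (Finset.mem_insert.mp (hD hx)).resolve_left ?_
          rintro rfl; exact hmD hx
        have hm' : m ∉ insert p D := by simp [hmD]; exact fun h => hpm h.symm
        simp only [hmD, hm', if_false]
        exact hg D p hDP hpP hpD

set_option maxHeartbeats 4000000 in
theorem bz_core (n i : ℕ) (M : Finset ℕ → ℤ) (hi1 : 1 ≤ i) (hi2 : i ≤ n)
    (hR : ∀ x y z K, 1 ≤ x → x < y → y < z → z ≤ n + 1 → K ⊆ Finset.Icc 1 (n + 1) →
      x ∉ K → y ∉ K → z ∉ K → (i ∈ K ∨ (i + 1 ∉ K ∧ x ≠ i + 1 ∧ y ≠ i + 1 ∧ z ≠ i + 1)) →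
      Rl M x y z K)
    (hI : ∀ x y K, 1 ≤ x → x ≤ n + 1 → 1 ≤ y → y ≤ n + 1 → x ≠ y → K ⊆ Finset.Icc 1 (n + 1) →
      x ∉ K → y ∉ K → (i ∈ K ∨ (i + 1 ∉ K ∧ x ≠ i + 1 ∧ y ≠ i + 1)) →
      Il M x y K)
    (hA : ∀ p L, 1 ≤ p → p < i → L ⊆ Finset.Icc 1 (n + 1) → p ∉ L → i ∉ L → i + 1 ∉ L →
      Rl M p i (i + 1) L)
    (hB : ∀ p L, i + 1 < p → p ≤ n + 1 → L ⊆ Finset.Icc 1 (n + 1) → p ∉ L → i ∉ L → i + 1 ∉ L →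
      Rl M i (i + 1) p L)
    (h0 : Il M i (i + 1) (Finset.Icc (i + 2) (n + 1))) :
    (∀ x y K, 1 ≤ x → x ≤ n + 1 → 1 ≤ y → y ≤ n + 1 → x ≠ y → K ⊆ Finset.Icc 1 (n + 1) →
      x ∉ K → y ∉ K → Il M x y K) ∧
    (∀ x y z K, 1 ≤ x → x < y → y < z → z ≤ n + 1 → K ⊆ Finset.Icc 1 (n + 1) →
      x ∉ K → y ∉ K → z ∉ K → Rl M x y z K) := by
  have hsub : ∀ x K, 1 ≤ x → x ≤ n + 1 → K ⊆ Finset.Icc 1 (n + 1) →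
      insert x K ⊆ Finset.Icc 1 (n + 1) := by
    intro x K h1 h2 hK
    exact Finset.insert_subset (by rw [Finset.mem_Icc]; omega) hK
  have hni : ∀ (x z : ℕ) (L : Finset ℕ), x ≠ z → x ∉ L → x ∉ insert z L := by
    intro x z L h1 h2 h3
    rcases Finset.mem_insert.1 h3 with h | h
    · exact h1 h
    · exact h2 h
  have hIs : ∀ x y K, Il M x y K → Il M y x K := by
    intro x y K h
    simp only [Il] at *
    rw [Finset.insert_comm y x]; omega
  -- T
  have hT : ∀ L, L ⊆ Finset.Icc 1 (n + 1) → i ∉ L → i + 1 ∉ L → Il M i (i + 1) L := by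
    apply bz_ind n i _ h0
    · intro p L h1 h2 hL hp hi hj h
      refine TA M p i (i + 1) L (hA p L h1 h2 hL hp hi hj) ?_ ?_ h
      · apply hI <;> first | assumption | exact hni _ _ _ (by omega) (by assumption) | exact hsub _ _ (by omega) (by omega) (by assumption) | exact Or.inl (Finset.mem_insert_self _ _) | omega | grind
      · apply hI <;> first | assumption | exact hni _ _ _ (by omega) (by assumption) | exact hsub _ _ (by omega) (by omega) (by assumption) | exact Or.inl (Finset.mem_insert_self _ _) | omega | grind
    · intro p L h1 h2 hL hp hi hj h
      refine TB M i (i + 1) p L (hB p L h1 h2 hL hp hi hj) ?_ ?_ h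
      · apply hI <;> first | assumption | exact hni _ _ _ (by omega) (by assumption) | exact hsub _ _ (by omega) (by omega) (by assumption) | exact Or.inl (Finset.mem_insert_self _ _) | omega | grind
      · apply hI <;> first | assumption | exact hni _ _ _ (by omega) (by assumption) | exact hsub _ _ (by omega) (by omega) (by assumption) | exact Or.inl (Finset.mem_insert_self _ _) | omega | grind
  have hJ : ∀ p L, 1 ≤ p → p ≤ n + 1 → p ≠ i → p ≠ i + 1 → L ⊆ Finset.Icc 1 (n + 1) → p ∉ L →
      i ∉ L → i + 1 ∉ L → Il M (i + 1) p L ∧ Il M i p (insert (i + 1) L) := by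
    intro p L h1 h2 h3 h4 hL hp hi hj
    rcases lt_or_gt_of_ne h3 with h | h
    · have a1 := hA p L h1 h hL hp hi hj
      have a2 : Il M p i L := by apply hI <;> first | assumption | exact hni _ _ _ (by omega) (by assumption) | exact hsub _ _ (by omega) (by omega) (by assumption) | exact Or.inl (Finset.mem_insert_self _ _) | omega | grind
      have a3 : Il M p (i + 1) (insert i L) := by apply hI <;> first | assumption | exact hni _ _ _ (by omega) (by assumption) | exact hsub _ _ (by omega) (by omega) (by assumption) | exact Or.inl (Finset.mem_insert_self _ _) | omega | grind
      exact ⟨JA0 M p i (i + 1) L a1 a2 a3 (hT L hL hi hj), JA1 M p i (i + 1) L a1 a2 a3 (hT L hL hi hj)⟩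
    · have a1 := hB p L (by omega) h2 hL hp hi hj
      have a2 : Il M i p L := by apply hI <;> first | assumption | exact hni _ _ _ (by omega) (by assumption) | exact hsub _ _ (by omega) (by omega) (by assumption) | exact Or.inl (Finset.mem_insert_self _ _) | omega | grind
      have a3 : Il M (i + 1) p (insert i L) := by apply hI <;> first | assumption | exact hni _ _ _ (by omega) (by assumption) | exact hsub _ _ (by omega) (by omega) (by assumption) | exact Or.inl (Finset.mem_insert_self _ _) | omega | grind
      have a4 : Il M i (i + 1) (insert p L) := by apply hT <;> first | assumption | exact hni _ _ _ (by omega) (by assumption) | exact hsub _ _ (by omega) (by omega) (by assumption) | exact Or.inl (Finset.mem_insert_self _ _) | omega | grind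
      exact ⟨JB0 M i (i + 1) p L a1 a2 a3 a4, JB1 M i (i + 1) p L a1 a2 a3 a4⟩
  -- squares
  have sA : ∀ p q L, 1 ≤ p → p < q → q < i → L ⊆ Finset.Icc 1 (n + 1) → p ∉ L → q ∉ L →
      i ∉ L → i + 1 ∉ L → Rl M p q i (insert (i + 1) L) ∧ Rl M p q (i + 1) L ∧
        Il M p q (insert (i + 1) L) := by
    intro p q L h1 h2 h3 hL hp hq hi hj
    obtain ⟨a0, a1, a2, a3, a4, a5⟩ : Rl M p q i L ∧
        Rl M p q (i + 1) (insert i L) ∧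
        Rl M p i (i + 1) L ∧
        Rl M p i (i + 1) (insert q L) ∧
        Rl M q i (i + 1) L ∧
        Rl M q i (i + 1) (insert p L) := by
      refine ⟨?_, ?_, ?_, ?_, ?_, ?_⟩ <;> first | apply hA | apply hB | apply hR
      all_goals first | assumption | exact hni _ _ _ (by omega) (by assumption) | exact hsub _ _ (by omega) (by omega) (by assumption) | exact Or.inl (Finset.mem_insert_self _ _) | omega | grind
    refine ⟨sqA0 M p q i (i + 1) L a0 a1 a2 a3 a4 a5, sqA1 M p q i (i + 1) L a0 a1 a2 a3 a4 a5,
      inA M p q i (i + 1) L a0 a1 a2 a3 a4 a5 ?_ ?_ ?_ ?_⟩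
    all_goals first | apply hT | apply hI
    all_goals first | assumption | exact hni _ _ _ (by omega) (by assumption) | exact hsub _ _ (by omega) (by omega) (by assumption) | exact Or.inl (Finset.mem_insert_self _ _) | omega | grind
  have sB : ∀ p q L, 1 ≤ p → p < i → i + 1 < q → q ≤ n + 1 → L ⊆ Finset.Icc 1 (n + 1) →
      p ∉ L → q ∉ L → i ∉ L → i + 1 ∉ L → Rl M p i q (insert (i + 1) L) ∧ Rl M p (i + 1) q L ∧
        Il M p q (insert (i + 1) L) := by
    intro p q L h1 h2 h3 h4 hL hp hq hi hj
    obtain ⟨a0, a1, a2, a3, a4, a5⟩ : Rl M p i q L ∧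
        Rl M p (i + 1) q (insert i L) ∧
        Rl M p i (i + 1) L ∧
        Rl M p i (i + 1) (insert q L) ∧
        Rl M i (i + 1) q L ∧
        Rl M i (i + 1) q (insert p L) := by
      refine ⟨?_, ?_, ?_, ?_, ?_, ?_⟩ <;> first | apply hA | apply hB | apply hR
      all_goals first | assumption | exact hni _ _ _ (by omega) (by assumption) | exact hsub _ _ (by omega) (by omega) (by assumption) | exact Or.inl (Finset.mem_insert_self _ _) | omega | grind
    refine ⟨sqB0 M p i (i + 1) q L a0 a1 a2 a3 a4 a5, sqB1 M p i (i + 1) q L a0 a1 a2 a3 a4 a5,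
      inB M p i (i + 1) q L a0 a1 a2 a3 a4 a5 ?_ ?_⟩
    all_goals first | apply hT | apply hI
    all_goals first | assumption | exact hni _ _ _ (by omega) (by assumption) | exact hsub _ _ (by omega) (by omega) (by assumption) | exact Or.inl (Finset.mem_insert_self _ _) | omega | grind
  have sC : ∀ p q L, i + 1 < p → p < q → q ≤ n + 1 → L ⊆ Finset.Icc 1 (n + 1) →
      p ∉ L → q ∉ L → i ∉ L → i + 1 ∉ L → Rl M i p q (insert (i + 1) L) ∧ Rl M (i + 1) p q L ∧
        Il M p q (insert (i + 1) L) := by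
    intro p q L h1 h2 h3 hL hp hq hi hj
    obtain ⟨a0, a1, a2, a3, a4, a5⟩ : Rl M i p q L ∧
        Rl M (i + 1) p q (insert i L) ∧
        Rl M i (i + 1) p L ∧
        Rl M i (i + 1) p (insert q L) ∧
        Rl M i (i + 1) q L ∧
        Rl M i (i + 1) q (insert p L) := by
      refine ⟨?_, ?_, ?_, ?_, ?_, ?_⟩ <;> first | apply hA | apply hB | apply hR
      all_goals first | assumption | exact hni _ _ _ (by omega) (by assumption) | exact hsub _ _ (by omega) (by omega) (by assumption) | exact Or.inl (Finset.mem_insert_self _ _) | omega | grind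
    refine ⟨sqC0 M i (i + 1) p q L a0 a1 a2 a3 a4 a5, sqC1 M i (i + 1) p q L a0 a1 a2 a3 a4 a5,
      inC M i (i + 1) p q L a0 a1 a2 a3 a4 a5 ?_ ?_ ?_ ?_ ?_⟩
    all_goals first | apply hT | apply hI
    all_goals first | assumption | exact hni _ _ _ (by omega) (by assumption) | exact hsub _ _ (by omega) (by omega) (by assumption) | exact Or.inl (Finset.mem_insert_self _ _) | omega | grind
  have qA := fun p q L h1 h2 h3 h4 h5 h6 h7 h8 => (sA p q L h1 h2 h3 h4 h5 h6 h7 h8).2.1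
  have qB := fun p q L h1 h2 h3 h4 h5 h6 h7 h8 h9 => (sB p q L h1 h2 h3 h4 h5 h6 h7 h8 h9).2.1
  have qC := fun p q L h1 h2 h3 h4 h5 h6 h7 h8 => (sC p q L h1 h2 h3 h4 h5 h6 h7 h8).2.1
  -- pairs
  have pI : ∀ p q L, 1 ≤ p → p < q → q ≤ n + 1 → p ≠ i → q ≠ i → p ≠ i + 1 → q ≠ i + 1 →
      L ⊆ Finset.Icc 1 (n + 1) → p ∉ L → q ∉ L → i ∉ L → i + 1 ∉ L →
      Il M p q (insert (i + 1) L) := by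
    intro p q L h1 h2 h3 h4 h5 h6 h7 hL hp hq hi hj
    by_cases c1 : q < i
    · exact (sA p q L h1 h2 c1 hL hp hq hi hj).2.2
    · by_cases c2 : p < i
      · exact (sB p q L h1 c2 (by omega) h3 hL hp hq hi hj).2.2
      · exact (sC p q L (by omega) h2 h3 hL hp hq hi hj).2.2
  constructor
  · intro x y K h1 h2 h3 h4 hne hK hx hy
    by_cases hi : i ∈ K
    · exact hI x y K h1 h2 h3 h4 hne hK hx hy (Or.inl hi)
    by_cases hj : i + 1 ∈ K
    · obtain ⟨L, hjL, rfl⟩ : ∃ L, i + 1 ∉ L ∧ K = insert (i + 1) L :=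
        ⟨K.erase (i + 1), by simp, (Finset.insert_erase hj).symm⟩
      simp only [Finset.mem_insert, not_or] at hx hy hi
      have hL : L ⊆ Finset.Icc 1 (n + 1) := (Finset.subset_insert _ _).trans hK
      by_cases c1 : x = i
      · subst c1
        exact (hJ y L h3 h4 (by omega) hy.1 hL hy.2 hi.2 hjL).2
      by_cases c2 : y = i
      · subst c2
        exact hIs _ _ _ (hJ x L h1 h2 (by omega) hx.1 hL hx.2 hi.2 hjL).2
      rcases lt_or_gt_of_ne hne with h | h
      · exact pI x y L h1 h h4 c1 c2 hx.1 hy.1 hL hx.2 hy.2 hi.2 hjL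
      · exact hIs _ _ _ (pI y x L h3 h h2 c2 c1 hy.1 hx.1 hL hy.2 hx.2 hi.2 hjL)
    · by_cases c1 : x = i + 1
      · subst c1
        by_cases c2 : y = i
        · subst c2; exact hIs _ _ _ (hT K hK hi hj)
        · exact (hJ y K h3 h4 c2 (by omega) hK hy hi hj).1
      by_cases c2 : y = i + 1
      · subst c2
        by_cases c3 : x = i
        · subst c3; exact (hT K hK hi hj)
        · exact hIs _ _ _ (hJ x K h1 h2 c3 (by omega) hK hx hi hj).1
      exact hI x y K h1 h2 h3 h4 hne hK hx hy (Or.inr ⟨hj, c1, c2⟩)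
  · intro x y z K h1 h2 h3 h4 hK hx hy hz
    by_cases hi : i ∈ K
    · exact hR x y z K h1 h2 h3 h4 hK hx hy hz (Or.inl hi)
    by_cases hj : i + 1 ∈ K
    · obtain ⟨L, hjL, rfl⟩ : ∃ L, i + 1 ∉ L ∧ K = insert (i + 1) L :=
        ⟨K.erase (i + 1), by simp, (Finset.insert_erase hj).symm⟩
      simp only [Finset.mem_insert, not_or] at hx hy hz hi
      have hL : L ⊆ Finset.Icc 1 (n + 1) := (Finset.subset_insert _ _).trans hK
      obtain ⟨hx1, hx⟩ := hx
      obtain ⟨hy1, hy⟩ := hy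
      obtain ⟨hz1, hz⟩ := hz
      replace hi := hi.2
      by_cases c1 : x = i
      · subst c1
        exact (sC y z L (by omega) h3 h4 hL hy hz hx hjL).1
      by_cases c2 : y = i
      · subst c2
        exact (sB x z L h1 h2 (by omega) h4 hL hx hz hy hjL).1
      by_cases c3 : z = i
      · subst c3
        exact (sA x y L h1 h2 h3 hL hx hy hz hjL).1
      have r0 : Rl M x y z L := by apply hR <;> first | assumption | exact hni _ _ _ (by omega) (by assumption) | exact hsub _ _ (by omega) (by omega) (by assumption) | exact Or.inl (Finset.mem_insert_self _ _) | omega | grind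
      have L1 := hsub x L h1 (by omega) hL
      have L2 := hsub y L (by omega) (by omega) hL
      have L3 := hsub z L (by omega) (by omega) hL
      by_cases d1 : z < i
      · apply cyc_s M x y z (i + 1) L
        all_goals first | exact r0 | apply qA | apply qB | apply qC
        all_goals first | assumption | exact hni _ _ _ (by omega) (by assumption) | exact hsub _ _ (by omega) (by omega) (by assumption) | exact Or.inl (Finset.mem_insert_self _ _) | omega | grind
      by_cases d2 : y < i
      · apply cyc_r M x y (i + 1) z L
        all_goals first | exact r0 | apply qA | apply qB | apply qC
        all_goals first | assumption | exact hni _ _ _ (by omega) (by assumption) | exact hsub _ _ (by omega) (by omega) (by assumption) | exact Or.inl (Finset.mem_insert_self _ _) | omega | grind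
      by_cases d3 : x < i
      · apply cyc_q M x (i + 1) y z L
        all_goals first | exact r0 | apply qA | apply qB | apply qC
        all_goals first | assumption | exact hni _ _ _ (by omega) (by assumption) | exact hsub _ _ (by omega) (by omega) (by assumption) | exact Or.inl (Finset.mem_insert_self _ _) | omega | grind
      · apply cyc_p M (i + 1) x y z L
        all_goals first | exact r0 | apply qA | apply qB | apply qC
        all_goals first | assumption | exact hni _ _ _ (by omega) (by assumption) | exact hsub _ _ (by omega) (by omega) (by assumption) | exact Or.inl (Finset.mem_insert_self _ _) | omega | grind
    · by_cases c1 : x = i + 1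
      · subst c1
        exact (sC y z K h2 h3 h4 hK hy hz hi hj).2.1
      by_cases c2 : y = i + 1
      · subst c2
        by_cases c : x = i
        · subst c; exact hB z K h3 h4 hK hz hi hj
        · exact (sB x z K h1 (by omega) h3 h4 hK hx hz hi hj).2.1
      by_cases c3 : z = i + 1
      · subst c3
        by_cases c : y = i
        · subst c; exact hA x K h1 h2 hK hx hi hj
        · exact (sA x y K h1 h2 (by omega) hK hx hy hi hj).2.1
      exact hR x y z K h1 h2 h3 h4 hK hx hy hz (Or.inr ⟨hj, c1, c2, c3⟩)

/-- edge weight -/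
def Aw (M : Finset ℕ → ℤ) (i : ℕ) (E : Finset ℕ) (p : ℕ) : ℤ :=
  M (insert i (insert (i + 1) E)) + M (insert p E) - M (insert i E) - M (insert i (insert p E))

theorem diaA (M : Finset ℕ → ℤ) (p q i : ℕ) (K : Finset ℕ)
    (h0 : Rl M p q i K) (h1 : Rl M p q (i + 1) (insert i K)) :
    min (Aw M i K p) (Aw M i (insert p K) q) = min (Aw M i K q) (Aw M i (insert q K) p) := by
  simp only [Rl, Aw, Finset.insert_comm] at *
  omega

theorem diaB (M : Finset ℕ → ℤ) (p q i : ℕ) (K : Finset ℕ)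
    (h0 : Rl M p i q K) (h1 : Rl M p (i + 1) q (insert i K)) :
    min (Aw M i (insert q K) p) (Aw M i (insert p K) q) = min (Aw M i K q) (Aw M i K p) := by
  simp only [Rl, Aw, Finset.insert_comm] at *
  omega

theorem diaC (M : Finset ℕ → ℤ) (p q i : ℕ) (K : Finset ℕ)
    (h0 : Rl M i p q K) (h1 : Rl M (i + 1) p q (insert i K)) :
    min (Aw M i (insert q K) p) (Aw M i K q) = min (Aw M i (insert p K) q) (Aw M i K p) := by
  simp only [Rl, Aw, Finset.insert_comm] at *
  omega

theorem exists_h (n i : ℕ) (M : Finset ℕ → ℤ) (hi1 : 1 ≤ i) (hi2 : i ≤ n) (t : ℤ)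
    (hR : ∀ x y z K, 1 ≤ x → x < y → y < z → z ≤ n + 1 → K ⊆ Finset.Icc 1 (n + 1) →
      x ∉ K → y ∉ K → z ∉ K → Rl M x y z K) :
    ∃ h : Finset ℕ → ℤ, h (Finset.Icc (i + 2) (n + 1)) = t ∧
      (∀ p L, 1 ≤ p → p < i → L ⊆ Finset.Icc 1 (n + 1) → p ∉ L → i ∉ L → i + 1 ∉ L →
        h (insert p L) = min (h L) (Aw M i L p)) ∧
      (∀ p L, i + 1 < p → p ≤ n + 1 → L ⊆ Finset.Icc 1 (n + 1) → p ∉ L → i ∉ L → i + 1 ∉ L →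
        h L = min (h (insert p L)) (Aw M i L p)) := by
  set L0 := Finset.Icc (i + 2) (n + 1) with hL0
  have mL0 : ∀ x, x ∈ L0 ↔ i + 2 ≤ x ∧ x ≤ n + 1 := fun x => by rw [hL0, Finset.mem_Icc]
  clear_value L0
  set P := ((Finset.Icc 1 (n + 1)).erase i).erase (i + 1) with hP
  have mP : ∀ x, x ∈ P ↔ x ≠ i + 1 ∧ x ≠ i ∧ 1 ≤ x ∧ x ≤ n + 1 := fun x => by
    rw [hP, Finset.mem_erase, Finset.mem_erase, Finset.mem_Icc]
  clear_value P
  obtain ⟨g, hg0, hg⟩ := exists_g P (fun D p => Aw M i ((symmDiff D L0).erase p) p) t (by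
    intro D p q hD hp hq hpq hpD hqD
    have key : ∀ p q, p ∈ P → q ∈ P → p < q → p ∉ D → q ∉ D →
      min (Aw M i ((symmDiff D L0).erase p) p) (Aw M i ((symmDiff (insert p D) L0).erase q) q) =
      min (Aw M i ((symmDiff D L0).erase q) q) (Aw M i ((symmDiff (insert q D) L0).erase p) p) := by
      clear hp hq hpq hpD hqD p q
      intro p q hp hq hpq hpD hqD
      rw [mP] at hp hq
      have hDP : ∀ x, x ∈ D → x ≠ i + 1 ∧ x ≠ i ∧ 1 ≤ x ∧ x ≤ n + 1 := fun x hx => (mP x).1 (hD hx)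
      set E := ((symmDiff D L0).erase p).erase q with hE
      have mE : ∀ x, x ∈ E ↔ x ≠ q ∧ x ≠ p ∧ (x ∈ D ∧ x ∉ L0 ∨ x ∈ L0 ∧ x ∉ D) := fun x => by
        rw [hE, Finset.mem_erase, Finset.mem_erase, Finset.mem_symmDiff]
      have hEs : E ⊆ Finset.Icc 1 (n + 1) := by
        intro x hx
        have := (mE x).1 hx
        rw [mL0] at this
        have := hDP x
        rw [Finset.mem_Icc]; grind
      have hpE : p ∉ E := by rw [mE]; simp
      have hqE : q ∉ E := by rw [mE]; simp
      have hiE : i ∉ E := by rw [mE, mL0]; have := hDP i; grind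
      have hjE : i + 1 ∉ E := by rw [mE, mL0]; have := hDP (i + 1); grind
      clear_value E
      have s1 : (symmDiff D L0).erase p = if q ∈ L0 then insert q E else E := by
        ext x
        split_ifs <;> simp only [Finset.mem_erase, Finset.mem_symmDiff, Finset.mem_insert, mE] <;> grind
      have s2 : (symmDiff D L0).erase q = if p ∈ L0 then insert p E else E := by
        ext x
        split_ifs <;> simp only [Finset.mem_erase, Finset.mem_symmDiff, Finset.mem_insert, mE] <;> grind
      have s3 : (symmDiff (insert p D) L0).erase q = if p ∈ L0 then E else insert p E := by
        ext x
        split_ifs <;> simp only [Finset.mem_erase, Finset.mem_symmDiff, Finset.mem_insert, mE] <;> grind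
      have s4 : (symmDiff (insert q D) L0).erase p = if q ∈ L0 then E else insert q E := by
        ext x
        split_ifs <;> simp only [Finset.mem_erase, Finset.mem_symmDiff, Finset.mem_insert, mE] <;> grind
      rw [s1, s2, s3, s4]
      have hR' : ∀ x y z, 1 ≤ x → x < y → y < z → z ≤ n + 1 →
          x ∉ insert i E → y ∉ insert i E → z ∉ insert i E → Rl M x y z (insert i E) := by
        intro x y z a b c d
        exact hR x y z _ a b c d (Finset.insert_subset (by rw [Finset.mem_Icc]; omega) hEs)
      by_cases c1 : q < i
      · have e1 : p ∉ L0 := by rw [mL0]; omega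
        have e2 : q ∉ L0 := by rw [mL0]; omega
        simp only [e1, e2, if_false]
        apply diaA
        · apply hR <;> first | assumption | omega
        · apply hR' <;> first | omega | grind
      · have e2 : q ∈ L0 := by rw [mL0]; omega
        by_cases c2 : p < i
        · have e1 : p ∉ L0 := by rw [mL0]; omega
          simp only [e1, e2, if_false, if_true]
          apply diaB
          · apply hR <;> first | assumption | omega
          · apply hR' <;> first | omega | grind
        · have e1 : p ∈ L0 := by rw [mL0]; omega
          simp only [e1, e2, if_true]
          apply diaC
          · apply hR <;> first | assumption | omega
          · apply hR' <;> first | omega | grind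
    rcases lt_or_gt_of_ne hpq with h | h
    · exact key p q hp hq h hpD hqD
    · exact (key q p hq hp h hqD hpD).symm)
  have hsP : ∀ L, L ⊆ Finset.Icc 1 (n + 1) → i ∉ L → i + 1 ∉ L → symmDiff L L0 ⊆ P := by
    intro L hL hi hj x hx
    rw [Finset.mem_symmDiff, mL0] at hx
    rw [mP]
    rcases hx with ⟨h1, _⟩ | ⟨h1, _⟩
    · have := Finset.mem_Icc.1 (hL h1)
      grind
    · omega
  refine ⟨fun L => g (symmDiff L L0), by simp [hg0], ?_, ?_⟩
  · intro p L h1 h2 hL hp hi hj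
    have e : p ∉ L0 := by rw [mL0]; omega
    have s1 : symmDiff (insert p L) L0 = insert p (symmDiff L L0) := by
      ext x; simp only [Finset.mem_symmDiff, Finset.mem_insert]; grind
    have s2 : (symmDiff (symmDiff L L0) L0).erase p = L := by
      rw [symmDiff_symmDiff_cancel_right, Finset.erase_eq_of_notMem hp]
    have := hg (symmDiff L L0) p (hsP L hL hi hj) (by rw [mP]; omega)
      (by rw [Finset.mem_symmDiff]; grind)
    rw [s2] at this
    simp only [s1]
    exact this
  · intro p L h1 h2 hL hp hi hj
    have e : p ∈ L0 := by rw [mL0]; omega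
    have s1 : symmDiff L L0 = insert p (symmDiff (insert p L) L0) := by
      ext x; simp only [Finset.mem_symmDiff, Finset.mem_insert]; grind
    have s2 : (symmDiff (symmDiff (insert p L) L0) L0).erase p = L := by
      rw [symmDiff_symmDiff_cancel_right, Finset.erase_insert hp]
    have := hg (symmDiff (insert p L) L0) p
      (hsP _ (Finset.insert_subset (by rw [Finset.mem_Icc]; omega) hL)
        (by rw [Finset.mem_insert]; grind) (by rw [Finset.mem_insert]; grind))
      (by rw [mP]; omega) (by rw [Finset.mem_symmDiff]; grind)
    rw [s2] at this
    simp only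
    rw [s1]
    exact this

theorem bz_uniq (n i : ℕ) (hi1 : 1 ≤ i) (hi2 : i ≤ n) (M M₁ M₂ : Finset ℕ → ℤ)
    (hB1 : IsEBZ n M₁) (hB2 : IsEBZ n M₂)
    (h0 : M₁ (Finset.Icc (i + 1) (n + 1)) = M₂ (Finset.Icc (i + 1) (n + 1)))
    (h1 : ∀ K : Finset ℕ, K ⊆ Finset.Icc 1 (n + 1) → ¬(i ∉ K ∧ i + 1 ∈ K) → M₁ K = M K)
    (h2 : ∀ K : Finset ℕ, K ⊆ Finset.Icc 1 (n + 1) → ¬(i ∉ K ∧ i + 1 ∈ K) → M₂ K = M K) :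
    ∀ K : Finset ℕ, K ⊆ Finset.Icc 1 (n + 1) → M₁ K = M₂ K := by
  have heq : ∀ K : Finset ℕ, K ⊆ Finset.Icc 1 (n + 1) → ¬(i ∉ K ∧ i + 1 ∈ K) → M₁ K = M₂ K :=
    fun K a b => (h1 K a b).trans (h2 K a b).symm
  have hsub : ∀ x K, 1 ≤ x → x ≤ n + 1 → K ⊆ Finset.Icc 1 (n + 1) →
      insert x K ⊆ Finset.Icc 1 (n + 1) := by
    intro x K h1 h2 hK
    exact Finset.insert_subset (by rw [Finset.mem_Icc]; omega) hK
  have key : ∀ L, L ⊆ Finset.Icc 1 (n + 1) → i ∉ L → i + 1 ∉ L →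
      M₁ (insert (i + 1) L) = M₂ (insert (i + 1) L) := by
    apply bz_ind n i
    · have : insert (i + 1) (Finset.Icc (i + 2) (n + 1)) = Finset.Icc (i + 1) (n + 1) := by
        ext x; simp only [Finset.mem_insert, Finset.mem_Icc]; omega
      rw [this]; exact h0
    · intro p L a b hL hp hi hj h
      have r1 := hB1.1.2.2.2 p i (i + 1) L a b (by omega) (by omega) hL hp hi hj
      have r2 := hB2.1.2.2.2 p i (i + 1) L a b (by omega) (by omega) hL hp hi hj
      have q0 := heq (insert i L) (hsub _ _ hi1 (by omega) hL) (by simp)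
      have q1 := heq (insert p (insert i L)) (hsub _ _ a (by omega) (hsub _ _ hi1 (by omega) hL)) (by simp)
      have q2 := heq (insert i (insert (i + 1) L)) (hsub _ _ hi1 (by omega) (hsub _ _ (by omega) (by omega) hL)) (by simp)
      have q3 := heq (insert p L) (hsub _ _ a (by omega) hL) (by grind)
      rw [Finset.insert_comm (i + 1) p]
      omega
    · intro p L a b hL hp hi hj h
      have r1 := hB1.1.2.2.2 i (i + 1) p L hi1 (by omega) a b hL hi hj hp
      have r2 := hB2.1.2.2.2 i (i + 1) p L hi1 (by omega) a b hL hi hj hp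
      have q0 := heq (insert i L) (hsub _ _ hi1 (by omega) hL) (by simp)
      have q1 := heq (insert i (insert p L)) (hsub _ _ hi1 (by omega) (hsub _ _ (by omega) (by omega) hL)) (by simp)
      have q2 := heq (insert i (insert (i + 1) L)) (hsub _ _ hi1 (by omega) (hsub _ _ (by omega) (by omega) hL)) (by simp)
      have q3 := heq (insert p L) (hsub _ _ (by omega) (by omega) hL) (by grind)
      omega
  intro K hK
  by_cases hc : i ∉ K ∧ i + 1 ∈ K
  · have := key (K.erase (i + 1)) ((Finset.erase_subset _ _).trans hK) (by simp [hc.1]) (by simp)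
    rwa [Finset.insert_erase hc.2] at this
  · exact heq K hK hc

theorem bz_exists (n i : ℕ) (hi1 : 1 ≤ i) (hi2 : i ≤ n) (M : Finset ℕ → ℤ) (hM : IsEBZ n M)
    (b : ℤ) (hb : b + M (insert i (Finset.Icc (i + 2) (n + 1))) ≤
      M (Finset.Icc i (n + 1)) + M (Finset.Icc (i + 2) (n + 1))) :
    ∃ M' : Finset ℕ → ℤ, IsEBZ n M' ∧ M' (Finset.Icc (i + 1) (n + 1)) = b ∧
      ∀ K : Finset ℕ, K ⊆ Finset.Icc 1 (n + 1) → ¬(i ∉ K ∧ i + 1 ∈ K) → M' K = M K := by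
  obtain ⟨⟨hM0, hM1, hMI, hMR⟩, hMe⟩ := hM
  have hR : ∀ x y z K, 1 ≤ x → x < y → y < z → z ≤ n + 1 → K ⊆ Finset.Icc 1 (n + 1) →
      x ∉ K → y ∉ K → z ∉ K → Rl M x y z K := hMR
  obtain ⟨h, h0, hA, hB⟩ := exists_h n i M hi1 hi2
    (b - M (insert i (Finset.Icc (i + 2) (n + 1)))) hR
  obtain ⟨M', hM'⟩ : ∃ M' : Finset ℕ → ℤ, ∀ K, M' K = if i ∉ K ∧ i + 1 ∈ K then
    M (insert i (K.erase (i + 1))) + h (K.erase (i + 1)) else M K := ⟨_, fun K => rfl⟩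
  have hag : ∀ K, ¬(i ∉ K ∧ i + 1 ∈ K) → M' K = M K := fun K hK => by rw [hM', if_neg hK]
  have hbv : ∀ L, i ∉ L → i + 1 ∉ L → M' (insert (i + 1) L) = M (insert i L) + h L := by
    intro L hi hj
    rw [hM', if_pos ⟨by simp [hi], by simp⟩, Finset.erase_insert hj]
  have e1 : insert (i + 1) (Finset.Icc (i + 2) (n + 1)) = Finset.Icc (i + 1) (n + 1) := by
    ext x; simp only [Finset.mem_insert, Finset.mem_Icc]; omega
  have e2 : insert i (Finset.Icc (i + 1) (n + 1)) = Finset.Icc i (n + 1) := by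
    ext x; simp only [Finset.mem_insert, Finset.mem_Icc]; omega
  have htop : M' (Finset.Icc (i + 1) (n + 1)) = b := by
    rw [← e1, hbv _ (by simp) (by simp), h0]; ring
  refine ⟨M', ?_, htop, fun K _ hK => hag K hK⟩
  have core := bz_core n i M' hi1 hi2 (by
      intro x y z K h1 h2 h3 h4 hK hx hy hz hc
      have := hR x y z K h1 h2 h3 h4 hK hx hy hz
      simp only [Rl] at *
      rw [hag, hag, hag, hag, hag, hag]
      · exact this
      all_goals grind) (by
      intro x y K h1 h2 h3 h4 hne hK hx hy hc
      have := hMI x y K h1 h2 h3 h4 hne hK hx hy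
      simp only [Il] at *
      rw [hag, hag, hag, hag]
      · exact this
      all_goals grind) (by
      intro p L h1 h2 hL hp hi hj
      have q := hA p L h1 h2 hL hp hi hj
      simp only [Rl, Aw] at *
      rw [Finset.insert_comm p (i + 1), hbv (insert p L) (by grind) (by grind), hbv L hi hj,
        hag (insert i L) (by simp), hag (insert p (insert i L)) (by simp),
        hag (insert i (insert (i + 1) L)) (by simp), hag (insert p L) (by grind),
        Finset.insert_comm p i]
      omega) (by
      intro p L h1 h2 hL hp hi hj
      have q := hB p L h1 h2 hL hp hi hj
      simp only [Rl, Aw] at *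
      rw [hbv (insert p L) (by grind) (by grind), hbv L hi hj,
        hag (insert i L) (by simp), hag (insert i (insert p L)) (by simp),
        hag (insert i (insert (i + 1) L)) (by simp), hag (insert p L) (by grind)]
      omega) (by
      simp only [Il]
      rw [e1, e2, htop, hag (insert i _) (by simp), hag (Finset.Icc i (n + 1)) (by simp; omega),
        hag (Finset.Icc (i + 2) (n + 1)) (by simp)]
      omega)
  refine ⟨⟨?_, ?_, core.1, core.2⟩, ?_⟩
  · rw [hag _ (by simp)]; exact hM0
  · rw [hag _ (by simp; omega)]; exact hM1
  · intro m h1 h2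
    rw [hag _ (by simp; omega)]; exact hMe m h1 h2

/-- let `M` be an `e`-BZ datum, `i ∈ [1,n]`, and set
`ε_i^*(M) = −(M_{[i+1,n+1]} + M_{{i}∪[i+2,n+1]} − M_{[i+2,n+1]} − M_{[i,n+1]})`.
(1) If `ε_i^*(M) > 0` there is a unique `e`-BZ datum `M'` (unique as a collection) with
`M'_{[i+1,n+1]} = M_{[i+1,n+1]} + 1` and `M'_K = M_K` for all
`K ∉ M_n^×(i)^* = {K : i ∉ K, i+1 ∈ K}`.  (2) There is a unique `e`-BZ datum `M''` with
`M''_{[i+1,n+1]} = M_{[i+1,n+1]} − 1` and `M''_K = M_K` for all `K ∉ M_n^×(i)^*`. -/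
theorem stmt8 (n : ℕ) (hn : 1 ≤ n) (M : Finset ℕ → ℤ) (hM : IsEBZ n M)
    (i : ℕ) (hi1 : 1 ≤ i) (hi2 : i ≤ n) :
    (0 < -(M (Finset.Icc (i + 1) (n + 1)) + M (insert i (Finset.Icc (i + 2) (n + 1))) -
        M (Finset.Icc (i + 2) (n + 1)) - M (Finset.Icc i (n + 1))) →
      ((∃ M' : Finset ℕ → ℤ, IsEBZ n M' ∧
          M' (Finset.Icc (i + 1) (n + 1)) = M (Finset.Icc (i + 1) (n + 1)) + 1 ∧
          ∀ K : Finset ℕ, K ⊆ Finset.Icc 1 (n + 1) → ¬(i ∉ K ∧ i + 1 ∈ K) → M' K = M K) ∧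
        ∀ M₁ M₂ : Finset ℕ → ℤ,
          (IsEBZ n M₁ ∧ M₁ (Finset.Icc (i + 1) (n + 1)) = M (Finset.Icc (i + 1) (n + 1)) + 1 ∧
            ∀ K : Finset ℕ, K ⊆ Finset.Icc 1 (n + 1) → ¬(i ∉ K ∧ i + 1 ∈ K) → M₁ K = M K) →
          (IsEBZ n M₂ ∧ M₂ (Finset.Icc (i + 1) (n + 1)) = M (Finset.Icc (i + 1) (n + 1)) + 1 ∧
            ∀ K : Finset ℕ, K ⊆ Finset.Icc 1 (n + 1) → ¬(i ∉ K ∧ i + 1 ∈ K) → M₂ K = M K) →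
          ∀ K : Finset ℕ, K ⊆ Finset.Icc 1 (n + 1) → M₁ K = M₂ K)) ∧
    ((∃ M'' : Finset ℕ → ℤ, IsEBZ n M'' ∧
        M'' (Finset.Icc (i + 1) (n + 1)) = M (Finset.Icc (i + 1) (n + 1)) - 1 ∧
        ∀ K : Finset ℕ, K ⊆ Finset.Icc 1 (n + 1) → ¬(i ∉ K ∧ i + 1 ∈ K) → M'' K = M K) ∧
      ∀ M₁ M₂ : Finset ℕ → ℤ,
        (IsEBZ n M₁ ∧ M₁ (Finset.Icc (i + 1) (n + 1)) = M (Finset.Icc (i + 1) (n + 1)) - 1 ∧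
          ∀ K : Finset ℕ, K ⊆ Finset.Icc 1 (n + 1) → ¬(i ∉ K ∧ i + 1 ∈ K) → M₁ K = M K) →
        (IsEBZ n M₂ ∧ M₂ (Finset.Icc (i + 1) (n + 1)) = M (Finset.Icc (i + 1) (n + 1)) - 1 ∧
          ∀ K : Finset ℕ, K ⊆ Finset.Icc 1 (n + 1) → ¬(i ∉ K ∧ i + 1 ∈ K) → M₂ K = M K) →
        ∀ K : Finset ℕ, K ⊆ Finset.Icc 1 (n + 1) → M₁ K = M₂ K) := by
  have hT := hM.1.2.2.1 i (i + 1) (Finset.Icc (i + 2) (n + 1)) hi1 (by omega) (by omega) (by omega)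
    (by omega) (Finset.Icc_subset_Icc (by omega) le_rfl) (by simp) (by simp)
  have e1 : insert (i + 1) (Finset.Icc (i + 2) (n + 1)) = Finset.Icc (i + 1) (n + 1) := by
    ext x; simp only [Finset.mem_insert, Finset.mem_Icc]; omega
  have e2 : insert i (Finset.Icc (i + 1) (n + 1)) = Finset.Icc i (n + 1) := by
    ext x; simp only [Finset.mem_insert, Finset.mem_Icc]; omega
  rw [e1, e2] at hT
  refine ⟨fun he => ⟨bz_exists n i hi1 hi2 M hM (M (Finset.Icc (i + 1) (n + 1)) + 1) (by omega), ?_⟩,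
    bz_exists n i hi1 hi2 M hM (M (Finset.Icc (i + 1) (n + 1)) - 1) (by omega), ?_⟩
  · rintro M₁ M₂ ⟨a1, a2, a3⟩ ⟨b1, b2, b3⟩
    exact bz_uniq n i hi1 hi2 M M₁ M₂ a1 b1 (a2.trans b2.symm) a3 b3
  · rintro M₁ M₂ ⟨a1, a2, a3⟩ ⟨b1, b2, b3⟩
    exact bz_uniq n i hi1 hi2 M M₁ M₂ a1 b1 (a2.trans b2.symm) a3 b3
end
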